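/- For every n ≥ 0, dim_ℂ Ĥ^n_e + dim_ℂ Ĥ^n_f = (r+s−1)^n if n ≡ 0 or 1 (mod 4), and dim_ℂ Ĥ^n_e + dim_ℂ Ĥ^n_f = (r+s−1)^n + 1 if n ≡ 2 or 3 (mod 4). -/

import Mathlib

open Finsupp Submodule LinearMap

set_option maxSynthPendingDepth 2

namespace NilpotentCohomology

/-- The big space of cochains of all degrees: formal ℂ-linear combinations of
basis symbols `φ^I_x` indexed by a multi-index `I : List (Fin m)` and an output
index `x : Fin m`. -/
abbrev Cochain (m : ℕ) : Type := (List (Fin m) × Fin m) →₀ ℂ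

/-- Parity of an index: `0` if the index is among the first `r` (even) ones, `1` otherwise. -/
def par (r : ℕ) {m : ℕ} (i : Fin m) : ℕ := if (i : ℕ) < r then 0 else 1

/-- Parity of a multi-index: the sum of the parities of its entries. -/
def lpar (r : ℕ) {m : ℕ} (I : List (Fin m)) : ℕ := (I.map (par r)).sum

/-- Parity of a basis cochain `φ^I_x`: `|I| + |x|`. -/
def ppar (r : ℕ) {m : ℕ} (p : List (Fin m) × Fin m) : ℕ := lpar r p.1 + par r p.2

/-- `(I, J, k)`: the multi-index `I` with its `k`-th entry (0-indexed) replaced by the string `J`. -/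
def insertAt {m : ℕ} (I J : List (Fin m)) (k : ℕ) : List (Fin m) :=
  I.take k ++ J ++ I.drop (k + 1)

/-- The insertion product of two basis cochains `φ^I_x ∘ φ^J_y`. -/
noncomputable def basisComp (r : ℕ) {m : ℕ} (p q : List (Fin m) × Fin m) : Cochain m :=
  ∑ k : Fin p.1.length,
    if p.1.get k = q.2 then
      ((-1 : ℂ) ^ (lpar r (p.1.take ((k : ℕ) + 1)) * ppar r q)) •
        Finsupp.single (insertAt p.1 q.1 (k : ℕ), p.2) (1 : ℂ)
    else 0

/-- The insertion product, extended bilinearly. -/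
noncomputable def comp (r : ℕ) {m : ℕ} :
    Cochain m →ₗ[ℂ] Cochain m →ₗ[ℂ] Cochain m :=
  Finsupp.lsum ℂ fun p => LinearMap.toSpanSingleton ℂ _
    (Finsupp.lsum ℂ fun q => LinearMap.toSpanSingleton ℂ (Cochain m) (basisComp r p q))

/-- The bracket `[φ, ψ] = φ∘ψ − (−1)^{|φ||ψ|} ψ∘φ` of two parity-homogeneous cochains
of parities `pf` and `pg`. -/
noncomputable def bracket (r : ℕ) {m : ℕ} (pf pg : ℕ) (f g : Cochain m) : Cochain m :=
  comp r f g - ((-1 : ℂ) ^ (pf * pg)) • comp r g f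

/-- The quadratic cochain `φ^{(a,a)}_b`. -/
noncomputable def dd {m : ℕ} (a b : Fin m) : Cochain m :=
  Finsupp.single ([a, a], b) (1 : ℂ)

/-- The linear map multiplying each basis cochain by `(−1)^{its parity}`. -/
noncomputable def twist (r : ℕ) {m : ℕ} : Cochain m →ₗ[ℂ] Cochain m :=
  Finsupp.lsum ℂ fun p => LinearMap.toSpanSingleton ℂ (Cochain m)
    (((-1 : ℂ) ^ (ppar r p)) • Finsupp.single p (1 : ℂ))

/-- The coboundary operator `D(φ) = [d, φ] = d∘φ − (−1)^{|d||φ|} φ∘d` for the odd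
codifferential `d = φ^{(a,a)}_b`, extended linearly from parity-homogeneous `φ`. -/
noncomputable def Dop (r : ℕ) {m : ℕ} (a b : Fin m) : Cochain m →ₗ[ℂ] Cochain m :=
  comp r (dd a b) - ((comp r).flip (dd a b)) ∘ₗ twist r

/-- `C^n`: the span of the basis cochains `φ^I_x` with `I` of length `n`. -/
noncomputable def Cn (m n : ℕ) : Submodule ℂ (Cochain m) :=
  Submodule.span ℂ
    {f | ∃ I : List (Fin m), I.length = n ∧ ∃ x : Fin m, f = Finsupp.single (I, x) 1}

/-- `C^n_x`: the span of the basis cochains `φ^I_x` with `I` of length `n` and output `x`. -/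
noncomputable def Cnx (m : ℕ) (n : ℕ) (x : Fin m) : Submodule ℂ (Cochain m) :=
  Submodule.span ℂ
    {f | ∃ I : List (Fin m), I.length = n ∧ f = Finsupp.single (I, x) 1}

/-- The projection onto the cochains with output index `x`. -/
noncomputable def projOut {m : ℕ} (x : Fin m) : Cochain m →ₗ[ℂ] Cochain m :=
  Finsupp.lsum ℂ fun p => LinearMap.toSpanSingleton ℂ (Cochain m)
    (if p.2 = x then Finsupp.single p (1 : ℂ) else 0)

/-- `λ^J (φ^I_x) = φ^{JI}_x`, extended linearly. -/
noncomputable def lam {m : ℕ} (J : List (Fin m)) : Cochain m →ₗ[ℂ] Cochain m :=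
  Finsupp.lsum ℂ fun p => LinearMap.toSpanSingleton ℂ (Cochain m)
    (Finsupp.single (J ++ p.1, p.2) (1 : ℂ))

/-- `ρ^J (φ^I_x) = (−1)^{|I||J|} φ^{IJ}_x`, extended linearly. -/
noncomputable def rho (r : ℕ) {m : ℕ} (J : List (Fin m)) : Cochain m →ₗ[ℂ] Cochain m :=
  Finsupp.lsum ℂ fun p => LinearMap.toSpanSingleton ℂ (Cochain m)
    (((-1 : ℂ) ^ (lpar r p.1 * lpar r J)) • Finsupp.single (p.1 ++ J, p.2) (1 : ℂ))

/-- `θ = λ^{(a,b)} − λ^{(b,a)}`. -/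
noncomputable def theta {m : ℕ} (a b : Fin m) : Cochain m →ₗ[ℂ] Cochain m :=
  lam [a, b] - lam [b, a]

/-- `τ`: swaps the outputs `a` and `b` of basis cochains (identity on other outputs). -/
noncomputable def tau {m : ℕ} (a b : Fin m) : Cochain m →ₗ[ℂ] Cochain m :=
  Finsupp.lsum ℂ fun p => LinearMap.toSpanSingleton ℂ (Cochain m)
    (Finsupp.single (p.1, if p.2 = a then b else if p.2 = b then a else p.2) (1 : ℂ))

/-! ### Full cohomology -/

/-- Cocycles of degree `n` of the full complex. -/
noncomputable def Zfull (r : ℕ) {m : ℕ} (a b : Fin m) (n : ℕ) : Submodule ℂ (Cochain m) :=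
  Cn m n ⊓ LinearMap.ker (Dop r a b)

/-- Coboundaries of degree `n` of the full complex (`C^{-1} = 0`). -/
noncomputable def Bfull (r : ℕ) {m : ℕ} (a b : Fin m) : ℕ → Submodule ℂ (Cochain m)
  | 0 => ⊥
  | n + 1 => Submodule.map (Dop r a b) (Cn m n)

/-- The full cohomology `H^n = Z^n / B^n`. -/
noncomputable abbrev Hfull (r : ℕ) {m : ℕ} (a b : Fin m) (n : ℕ) : Type :=
  Zfull r a b n ⧸ (Bfull r a b n).comap (Zfull r a b n).subtype

/-! ### The restricted complexes -/

/-- The restricted differential `D_x`: the `e₁`-output component of `D` when `x = a`,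
and `D` itself (which preserves output `x`) otherwise. -/
noncomputable def Dx (r : ℕ) {m : ℕ} (a b x : Fin m) : Cochain m →ₗ[ℂ] Cochain m :=
  if x = a then projOut a ∘ₗ Dop r a b else Dop r a b

/-- Cocycles of the restricted complex `(C^•_x, D_x)`. -/
noncomputable def Zx (r : ℕ) {m : ℕ} (a b x : Fin m) (n : ℕ) : Submodule ℂ (Cochain m) :=
  Cnx m n x ⊓ LinearMap.ker (Dx r a b x)

/-- Coboundaries of the restricted complex `(C^•_x, D_x)` (`C^{-1}_x = 0`). -/
noncomputable def Bx (r : ℕ) {m : ℕ} (a b x : Fin m) : ℕ → Submodule ℂ (Cochain m)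
  | 0 => ⊥
  | n + 1 => Submodule.map (Dx r a b x) (Cnx m n x)

/-- Cohomology `H^n_x` of the restricted complex `(C^•_x, D_x)`. -/
noncomputable abbrev Hx (r : ℕ) {m : ℕ} (a b x : Fin m) (n : ℕ) : Type :=
  Zx r a b x n ⧸ (Bx r a b x n).comap (Zx r a b x n).subtype

/-! ### The subcomplex `C^•_a ⊕ C^•_b` and the `b`-output complex -/

/-- `C^n_a ⊕ C^n_b` (internal direct sum). -/
noncomputable def Cpair (m : ℕ) (a b : Fin m) (n : ℕ) : Submodule ℂ (Cochain m) :=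
  Cnx m n a ⊔ Cnx m n b

noncomputable def Zpair (r : ℕ) {m : ℕ} (a b : Fin m) (n : ℕ) : Submodule ℂ (Cochain m) :=
  Cpair m a b n ⊓ LinearMap.ker (Dop r a b)

noncomputable def Bpair (r : ℕ) {m : ℕ} (a b : Fin m) : ℕ → Submodule ℂ (Cochain m)
  | 0 => ⊥
  | n + 1 => Submodule.map (Dop r a b) (Cpair m a b n)

/-- `H^n`: the cohomology of the subcomplex `(C^•_a ⊕ C^•_b, D)`. -/
noncomputable abbrev Hpair (r : ℕ) {m : ℕ} (a b : Fin m) (n : ℕ) : Type :=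
  Zpair r a b n ⧸ (Bpair r a b n).comap (Zpair r a b n).subtype

/-- Cocycles of `(C^•_b, D_b)`, where `D_b` is the restriction of `D`. -/
noncomputable def Zm (r : ℕ) {m : ℕ} (a b : Fin m) (n : ℕ) : Submodule ℂ (Cochain m) :=
  Cnx m n b ⊓ LinearMap.ker (Dop r a b)

noncomputable def Bm (r : ℕ) {m : ℕ} (a b : Fin m) : ℕ → Submodule ℂ (Cochain m)
  | 0 => ⊥
  | n + 1 => Submodule.map (Dop r a b) (Cnx m n b)

/-- `H^n_b`: the cohomology of `(C^•_b, D_b)`. -/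
noncomputable abbrev Hm (r : ℕ) {m : ℕ} (a b : Fin m) (n : ℕ) : Type :=
  Zm r a b n ⧸ (Bm r a b n).comap (Zm r a b n).subtype

lemma Zm_le_Zpair (r : ℕ) {m : ℕ} (a b : Fin m) (n : ℕ) :
    Zm r a b n ≤ Zpair r a b n :=
  inf_le_inf le_sup_right le_rfl

lemma Bm_le_Bpair (r : ℕ) {m : ℕ} (a b : Fin m) : ∀ n : ℕ, Bm r a b n ≤ Bpair r a b n
  | 0 => bot_le
  | _ + 1 => Submodule.map_mono le_sup_right

/-- The natural map `H^n_b → H^n` induced by the inclusion of cocycles. -/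
noncomputable def iotaHm (r : ℕ) {m : ℕ} (a b : Fin m) (n : ℕ) :
    Hm r a b n →ₗ[ℂ] Hpair r a b n :=
  Submodule.mapQ _ _ (Submodule.inclusion (Zm_le_Zpair r a b n))
    (fun z hz => Bm_le_Bpair r a b n hz)

/-- `Ĥ^n_f`: the image of `H^n_b` in `H^n`. -/
noncomputable def Hfhat (r : ℕ) {m : ℕ} (a b : Fin m) (n : ℕ) : Submodule ℂ (Hpair r a b n) :=
  LinearMap.range (iotaHm r a b n)

/-- `Ĥ^n_e = H^n / Ĥ^n_f`. -/
noncomputable abbrev Hehat (r : ℕ) {m : ℕ} (a b : Fin m) (n : ℕ) : Type :=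
  Hpair r a b n ⧸ Hfhat r a b n

/-! ### The spaces `Ĉ^n_x` of nontrivial cocycles -/

/-- The recursively defined subspaces `Ĉ^n_x` of nontrivial cocycles. -/
noncomputable def Chat (r : ℕ) {m : ℕ} (a b x : Fin m) : ℕ → Submodule ℂ (Cochain m)
  | 0 => Submodule.span ℂ {Finsupp.single (([] : List (Fin m)), x) 1}
  | 1 => Submodule.span ℂ
      ({Finsupp.single ([a], x) 1} ∪
        ⋃ c ∈ {c : Fin m | c ≠ a ∧ c ≠ b}, lam [c] '' (Chat r a b x 0 : Set (Cochain m)))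
  | n + 2 => Submodule.span ℂ
      ((⋃ c ∈ {c : Fin m | c ≠ a ∧ c ≠ b},
          lam [c] '' (Chat r a b x (n + 1) : Set (Cochain m))) ∪
        (theta a b '' (Chat r a b x n : Set (Cochain m))) ∪
        ⋃ c ∈ {c : Fin m | c ≠ a ∧ c ≠ b},
          (lam [a] + rho r [a]) '' (lam [c] '' (Chat r a b x n : Set (Cochain m))))


set_option linter.unusedSectionVars false
set_option linter.unusedVariables false
set_option linter.unusedSimpArgs false

section Words

variable {α : Type} [DecidableEq α]

abbrev TT (α : Type) : Type := List α →₀ ℂ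

noncomputable def one0 : TT α := Finsupp.single [] 1

noncomputable def lm (x : α) : TT α →ₗ[ℂ] TT α := Finsupp.lmapDomain ℂ ℂ (List.cons x)

noncomputable def rm (x : α) : TT α →ₗ[ℂ] TT α := Finsupp.lmapDomain ℂ ℂ (fun l => l ++ [x])

noncomputable def sg (e : α → ℂ) : TT α →ₗ[ℂ] TT α :=
  Finsupp.linearCombination ℂ (fun l => Finsupp.single l ((l.map e).prod))

noncomputable def hT (e : α → ℂ) (b : α) : TT α →ₗ[ℂ] TT α :=
  Finsupp.linearCombination ℂ (fun l => Finsupp.single (l ++ [b]) ((l.map e).prod))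

noncomputable def dW (e : α → ℂ) (a b : α) : List α → TT α
  | [] => 0
  | x :: l => (if x = b then lm a (lm a (Finsupp.single l 1)) else 0) + e x • lm x (dW e a b l)

noncomputable def dT (e : α → ℂ) (a b : α) : TT α →ₗ[ℂ] TT α :=
  Finsupp.linearCombination ℂ (dW e a b)

noncomputable def zW (a b : α) : List α → TT α
  | [] => one0
  | [x] => if x = b then 0 else lm x one0
  | x :: y :: u =>
    if x = b then 0 else
      if x = a then
        (if y = a then 0 else
          if y = b then lm a (lm b (zW a b u)) - lm b (lm a (zW a b u))
          else lm a (lm y (zW a b u)))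
      else lm x (zW a b (y :: u))

noncomputable def zT (a b : α) : TT α →ₗ[ℂ] TT α :=
  Finsupp.linearCombination ℂ (zW a b)

/-- left division -/
noncomputable def del (x : α) : TT α →ₗ[ℂ] TT α :=
  Finsupp.lcomapDomain (List.cons x) (List.cons_injective)

lemma del_apply (x : α) (u : TT α) (l : List α) : del x u l = u (x :: l) := rfl

@[simp] lemma lm_single (x : α) (l : List α) (c : ℂ) :
    lm x (Finsupp.single l c) = Finsupp.single (x :: l) c := by
  simp [lm]

@[simp] lemma rm_single (x : α) (l : List α) (c : ℂ) :
    rm x (Finsupp.single l c) = Finsupp.single (l ++ [x]) c := by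
  simp [rm]

lemma single_cons (x : α) (l : List α) :
    (Finsupp.single (x :: l) 1 : TT α) = lm x (Finsupp.single l 1) := by simp

/-- Two linear maps agreeing on words agree. -/
lemma T_ext {M : Type} [AddCommGroup M] [Module ℂ M] {f g : TT α →ₗ[ℂ] M}
    (h : ∀ l, f (Finsupp.single l 1) = g (Finsupp.single l 1)) (u : TT α) : f u = g u := by
  have : f = g := by
    ext l
    simpa using h l
  rw [this]

lemma T_ind {M : Type} [AddCommGroup M] [Module ℂ M] {f g : TT α →ₗ[ℂ] M}
    (h0 : f one0 = g one0) (h1 : ∀ x u, f u = g u → f (lm x u) = g (lm x u)) (u : TT α) :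
    f u = g u := by
  apply T_ext
  intro l
  induction l with
  | nil => exact h0
  | cons x l ih => rw [single_cons]; exact h1 x _ ih

lemma T_mem (S : Submodule ℂ (TT α)) (h : ∀ l, Finsupp.single l 1 ∈ S) (u : TT α) : u ∈ S := by
  induction u using Finsupp.induction_linear with
  | zero => exact S.zero_mem
  | add f g hf hg => exact S.add_mem hf hg
  | single l c =>
    have := S.smul_mem c (h l)
    simpa using this

lemma del_lm (x y : α) (u : TT α) : del x (lm y u) = if x = y then u else 0 := by
  have : ∀ u, (del x ∘ₗ lm y) u = (if x = y then LinearMap.id else 0 : TT α →ₗ[ℂ] TT α) u := by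
    apply T_ext
    intro l
    ext l'
    simp only [LinearMap.comp_apply, lm_single, del_apply]
    by_cases h : x = y
    · subst h; simp [Finsupp.single_apply]
    · simp [h, Finsupp.single_apply, Ne.symm h]
  have h := this u
  split_ifs at h ⊢ <;> simpa using h

@[simp] lemma lm_nil (y : α) (u : TT α) : (lm y u) [] = 0 := by
  unfold lm
  rw [Finsupp.lmapDomain_apply, Finsupp.mapDomain_of_notMem_range]
  simp

@[simp] lemma lm_cons (x y : α) (l : List α) (u : TT α) :
    (lm y u) (x :: l) = if x = y then u l else 0 := by
  rw [← del_apply, del_lm]; split_ifs <;> simp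

@[simp] lemma del_one (x : α) : del x (one0 : TT α) = 0 := by
  ext l; simp [del_apply, one0]

@[simp] lemma one_nil : (one0 : TT α) [] = 1 := by simp [one0]

lemma rm_lm (x y : α) (u : TT α) : rm x (lm y u) = lm y (rm x u) := by
  have : ∀ u, (rm x ∘ₗ lm y) u = (lm y ∘ₗ rm x) u := by
    apply T_ext; intro l; simp
  exact this u

lemma rm_one (x : α) : rm x (one0 : TT α) = lm x one0 := by simp [one0]

lemma sg_one (e : α → ℂ) : sg e one0 = one0 := by simp [sg, one0]
lemma hT_one (e : α → ℂ) (b : α) : hT e b one0 = lm b one0 := by simp [hT, one0]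
lemma dT_one (e : α → ℂ) (a b : α) : dT e a b one0 = 0 := by simp [dT, one0, dW]
lemma zT_one (a b : α) : zT a b one0 = one0 := by
  simp only [zT, one0, Finsupp.linearCombination_single, zW, one_smul]

lemma sg_lm (e : α → ℂ) (x : α) (u : TT α) : sg e (lm x u) = e x • lm x (sg e u) := by
  have : ∀ u, (sg e ∘ₗ lm x) u = (e x • (lm x ∘ₗ sg e)) u := by
    apply T_ext; intro l; simp [sg]
  exact this u

lemma hT_lm (e : α → ℂ) (b x : α) (u : TT α) : hT e b (lm x u) = e x • lm x (hT e b u) := by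
  have : ∀ u, (hT e b ∘ₗ lm x) u = (e x • (lm x ∘ₗ hT e b)) u := by
    apply T_ext; intro l; simp [hT]
  exact this u

lemma dT_lm (e : α → ℂ) (a b x : α) (u : TT α) :
    dT e a b (lm x u) = (if x = b then lm a (lm a u) else 0) + e x • lm x (dT e a b u) := by
  have : ∀ u, (dT e a b ∘ₗ lm x) u = ((if x = b then (lm a ∘ₗ lm a) else 0)
      + e x • (lm x ∘ₗ dT e a b)) u := by
    apply T_ext; intro l
    by_cases h : x = b <;> simp [dT, dW, h]
  have h := this u
  split_ifs at h ⊢ <;> simpa using h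

/-- Standing data. -/
structure Dat (e : α → ℂ) (a b : α) : Prop where
  ab : a ≠ b
  ea : e a = 1
  eb : e b = -1
  ee : ∀ x, e x * e x = 1

variable {e : α → ℂ} {a b : α}

lemma Dat.e0 (H : Dat e a b) (x : α) : e x ≠ 0 := by
  intro h; have := H.ee x; simp [h] at this

lemma dT_a (H : Dat e a b) (u : TT α) : dT e a b (lm a u) = lm a (dT e a b u) := by
  simp [dT_lm, H.ab, H.ea]

lemma dT_b (H : Dat e a b) (u : TT α) :
    dT e a b (lm b u) = lm a (lm a u) - lm b (dT e a b u) := by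
  simp [dT_lm, H.eb, sub_eq_add_neg]

lemma dT_c (H : Dat e a b) {x : α} (hx : x ≠ b) (u : TT α) :
    dT e a b (lm x u) = e x • lm x (dT e a b u) := by
  simp [dT_lm, hx]

lemma dd0 (H : Dat e a b) (u : TT α) : dT e a b (dT e a b u) = 0 := by
  have : ∀ u, (dT e a b ∘ₗ dT e a b) u = (0 : TT α →ₗ[ℂ] TT α) u := by
    apply T_ind
    · simp [dT_one]
    · intro x u hu
      simp only [LinearMap.comp_apply, LinearMap.zero_apply] at hu ⊢
      by_cases hx : x = b
      · subst hx; simp [dT_b H, dT_a H, hu]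
      · simp [dT_c H hx, hu]
  exact this u

lemma dT_sg (H : Dat e a b) (u : TT α) : dT e a b (sg e u) = - sg e (dT e a b u) := by
  have : ∀ u, (dT e a b ∘ₗ sg e) u = (-(sg e ∘ₗ dT e a b)) u := by
    apply T_ind
    · simp [dT_one, sg_one]
    · intro x u hu
      simp only [LinearMap.comp_apply, LinearMap.neg_apply] at hu ⊢
      by_cases hx : x = b
      · subst hx; simp [sg_lm, dT_b H, hu, H.eb, H.ea]
      · simp [dT_c H hx, sg_lm, hu]
  exact this u

lemma sg_sg (H : Dat e a b) (u : TT α) : sg e (sg e u) = u := by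
  have : ∀ u, (sg e ∘ₗ sg e) u = (LinearMap.id : TT α →ₗ[ℂ] TT α) u := by
    apply T_ind
    · simp [sg_one]
    · intro x u hu
      simp only [LinearMap.comp_apply, LinearMap.id_apply] at hu ⊢
      simp [sg_lm, hu, smul_smul, H.ee]
  exact this u

lemma sg_rm (H : Dat e a b) (u : TT α) : sg e (rm a u) = rm a (sg e u) := by
  have : ∀ u, (sg e ∘ₗ rm a) u = (rm a ∘ₗ sg e) u := by
    apply T_ind
    · simp [sg_one, rm_one, sg_lm, H.ea]
    · intro x u hu
      simp only [LinearMap.comp_apply] at hu ⊢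
      simp [sg_lm, hu, rm_lm]
  exact this u

lemma dT_rm (H : Dat e a b) (u : TT α) : dT e a b (rm a u) = rm a (dT e a b u) := by
  have : ∀ u, (dT e a b ∘ₗ rm a) u = (rm a ∘ₗ dT e a b) u := by
    apply T_ind
    · simp [dT_one, rm_one, dT_a H]
    · intro x u hu
      simp only [LinearMap.comp_apply] at hu ⊢
      by_cases hx : x = b
      · subst hx; simp [rm_lm, dT_b H, hu]
      · simp [dT_c H hx, rm_lm, hu]
  exact this u

lemma dT_hT (H : Dat e a b) (u : TT α) :
    dT e a b (hT e b u) = rm a (rm a u) - hT e b (dT e a b u) := by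
  have : ∀ u, (dT e a b ∘ₗ hT e b) u = (rm a ∘ₗ rm a - hT e b ∘ₗ dT e a b) u := by
    apply T_ind
    · simp [dT_one, rm_one, hT_one, dT_b H, rm_lm]
    · intro x u hu
      simp only [LinearMap.comp_apply, LinearMap.sub_apply] at hu ⊢
      by_cases hx : x = b
      · subst hx; simp [rm_lm, dT_b H, hT_lm, hu, H.eb, H.ea]; abel
      · simp [dT_c H hx, rm_lm, hT_lm, hu, smul_sub, smul_smul, H.ee]
  exact this u

lemma del_dT (H : Dat e a b) (x : α) (u : TT α) :
    del x (dT e a b u) = (if x = a then lm a (del b u) else 0) + e x • dT e a b (del x u) := by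
  have : ∀ u, (del x ∘ₗ dT e a b) u =
      ((if x = a then (lm a ∘ₗ del b) else 0) + e x • (dT e a b ∘ₗ del x)) u := by
    apply T_ind
    · split_ifs <;> simp [dT_one]
    · intro y u _
      by_cases hx : x = a
      · subst hx
        by_cases hy : y = b
        · subst hy; simp [dT_b H, del_lm, H.ab]
        · by_cases hxy : x = y
          · subst hxy; simp [dT_a H, del_lm, H.ab.symm, H.ea]
          · simp [dT_c H hy, del_lm, hxy, Ne.symm hy]
      · by_cases hy : y = b
        · subst hy
          by_cases hxy : x = y
          · subst hxy; simp [dT_b H, del_lm, hx, H.eb]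
          · simp [dT_b H, del_lm, hx, hxy]
        · by_cases hxy : x = y
          · subst hxy; simp [dT_c H hy, del_lm, hx]
          · simp [dT_c H hy, del_lm, hx, hxy]
  have h := this u
  split_ifs at h ⊢ <;> simpa using h

lemma del_rm (x y : α) (u : TT α) :
    del x (rm y u) = rm y (del x u) + (if x = y then u [] • one0 else 0) := by
  have : ∀ u, (del x ∘ₗ rm y) u = (rm y ∘ₗ del x +
      (if x = y then ((Finsupp.lapply [] : TT α →ₗ[ℂ] ℂ).smulRight one0) else 0) : TT α →ₗ[ℂ] TT α) u := by
    apply T_ind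
    · by_cases h : x = y <;> simp [rm_one, del_lm, h]
    · intro z u _
      simp only [LinearMap.comp_apply, LinearMap.add_apply, rm_lm, del_lm]
      by_cases h : x = y <;> split_ifs <;> simp
  have h := this u
  split_ifs at h ⊢ <;> simpa using h

@[simp] lemma rm_nil (y : α) (u : TT α) : (rm y u) [] = 0 := by
  unfold rm
  rw [Finsupp.lmapDomain_apply, Finsupp.mapDomain_of_notMem_range]
  simp

@[simp] lemma dT_nil (u : TT α) : (dT e a b u) [] = 0 := by
  have : ∀ u, (Finsupp.lapply [] ∘ₗ dT e a b) u = (0 : TT α →ₗ[ℂ] ℂ) u := by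
    apply T_ind
    · simp [dT_one]
    · intro x u _
      by_cases hx : x = b <;> simp [dT_lm, hx]
  exact this u

/-! zT -/

lemma zW_c {x : α} (hxa : x ≠ a) (hxb : x ≠ b) (l : List α) :
    zW a b (x :: l) = lm x (zW a b l) := by
  cases l <;> simp [zW, hxa, hxb]

lemma zT_single (l : List α) : zT a b (Finsupp.single l 1) = zW a b l := by
  simp [zT]

lemma zT_c {x : α} (hxa : x ≠ a) (hxb : x ≠ b) (u : TT α) :
    zT a b (lm x u) = lm x (zT a b u) := by
  have : ∀ u, (zT a b ∘ₗ lm x) u = (lm x ∘ₗ zT a b) u := by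
    apply T_ext; intro l; simp [zT, zW_c hxa hxb]
  exact this u

lemma zT_ac (hab : a ≠ b) {x : α} (hxa : x ≠ a) (hxb : x ≠ b) (u : TT α) :
    zT a b (lm a (lm x u)) = lm a (lm x (zT a b u)) := by
  have : ∀ u, (zT a b ∘ₗ lm a ∘ₗ lm x) u = (lm a ∘ₗ lm x ∘ₗ zT a b) u := by
    apply T_ext; intro l; simp [zT, zW, hxa, hxb, hab]
  exact this u

lemma zT_ab (hab : a ≠ b) (u : TT α) :
    zT a b (lm a (lm b u)) = lm a (lm b (zT a b u)) - lm b (lm a (zT a b u)) := by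
  have : ∀ u, (zT a b ∘ₗ lm a ∘ₗ lm b) u =
      (lm a ∘ₗ lm b ∘ₗ zT a b - lm b ∘ₗ lm a ∘ₗ zT a b) u := by
    apply T_ext; intro l; simp [zT, zW, hab, hab.symm]
  exact this u

lemma zT_aa (hab : a ≠ b) (u : TT α) : zT a b (lm a (lm a u)) = 0 := by
  have : ∀ u, (zT a b ∘ₗ lm a ∘ₗ lm a) u = (0 : TT α →ₗ[ℂ] TT α) u := by
    apply T_ext; intro l; simp [zT, zW, hab]
  exact this u

lemma zT_a (hab : a ≠ b) : zT a b (lm a one0) = lm a one0 := by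
  simp [zT, zW, one0, hab]

lemma zT_b (u : TT α) : zT a b (lm b u) = 0 := by
  have : ∀ u, (zT a b ∘ₗ lm b) u = (0 : TT α →ₗ[ℂ] TT α) u := by
    apply T_ext; intro l; cases l <;> simp [zT, zW]
  exact this u

/-- Induction principle adapted to `zT`. -/
lemma T_ind2 (hab : a ≠ b) {M : Type} [AddCommGroup M] [Module ℂ M] {f g : TT α →ₗ[ℂ] M}
    (h0 : f one0 = g one0) (h1 : f (lm a one0) = g (lm a one0))
    (hb : ∀ u, f (lm b u) = g (lm b u))
    (hc : ∀ x, x ≠ a → x ≠ b → ∀ u, f u = g u → f (lm x u) = g (lm x u))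
    (haa : ∀ u, f u = g u → f (lm a (lm a u)) = g (lm a (lm a u)))
    (hab' : ∀ u, f u = g u → f (lm a (lm b u)) = g (lm a (lm b u)))
    (hac : ∀ x, x ≠ a → x ≠ b → ∀ u, f u = g u → f (lm a (lm x u)) = g (lm a (lm x u)))
    (u : TT α) : f u = g u := by
  apply T_ext
  intro l
  induction hn : l.length using Nat.strong_induction_on generalizing l with
  | _ n ih =>
    match l, hn with
    | [], _ => exact h0
    | x :: l, hn =>
      by_cases hxb : x = b
      · subst hxb; rw [single_cons]; exact hb _
      by_cases hxa : x = a
      · subst hxa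
        match l, hn with
        | [], _ => rw [single_cons]; exact h1
        | y :: l, hn =>
          rw [single_cons, single_cons]
          have := ih l.length (by simp at hn; omega) l rfl
          by_cases hyb : y = b
          · subst hyb; exact hab' _ this
          by_cases hya : y = x
          · subst hya; exact haa _ this
          exact hac y hya hyb _ this
      · rw [single_cons]
        exact hc x hxa hxb _ (ih l.length (by simp at hn; omega) l rfl)

lemma dT_zT (H : Dat e a b) (u : TT α) : dT e a b (zT a b u) = 0 := by
  have : ∀ u, (dT e a b ∘ₗ zT a b) u = (0 : TT α →ₗ[ℂ] TT α) u := by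
    apply T_ind2 H.ab <;> simp only [LinearMap.comp_apply, LinearMap.zero_apply]
    · simp [zT_one, dT_one]
    · simp [zT_a H.ab, dT_one, dT_a H]
    · simp [zT_b]
    · intro x h1 h2 u hu; simp [zT_c h1 h2, dT_c H h2, hu]
    · simp [zT_aa H.ab]
    · intro u hu; simp [zT_ab H.ab, dT_a H, dT_b H, hu]
    · intro x h1 h2 u hu; simp [zT_ac H.ab h1 h2, dT_c H h2, dT_a H, hu]
  exact this u

lemma del_zT_c (hab : a ≠ b) {x : α} (hxa : x ≠ a) (hxb : x ≠ b) (u : TT α) :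
    del x (zT a b u) = zT a b (del x u) := by
  have : ∀ u, (del x ∘ₗ zT a b) u = (zT a b ∘ₗ del x) u := by
    apply T_ind2 hab <;> simp only [LinearMap.comp_apply]
    · simp [zT_one]
    · simp [zT_a hab, del_lm, hxa]
    · simp [zT_b, del_lm, hxb]
    · intro y h1 h2 u _
      by_cases h : x = y
      · subst h; simp [zT_c h1 h2, del_lm]
      · simp [zT_c h1 h2, del_lm, h]
    · simp [zT_aa hab, del_lm, hxa]
    · simp [zT_ab hab, del_lm, hxa, hxb]
    · intro y h1 h2 u _; simp [zT_ac hab h1 h2, del_lm, hxa]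
  exact this u

lemma del_zT_ay (hab : a ≠ b) {x : α} (hxa : x ≠ a) (u : TT α) :
    del x (del a (zT a b u)) = zT a b (del x (del a u)) := by
  have : ∀ u, (del x ∘ₗ del a ∘ₗ zT a b) u = (zT a b ∘ₗ del x ∘ₗ del a) u := by
    apply T_ind2 hab <;> simp only [LinearMap.comp_apply]
    · simp [zT_one]
    · simp [zT_a hab, del_lm]
    · simp [zT_b, del_lm, hab]
    · intro y h1 h2 u _
      simp [zT_c h1 h2, del_lm, h1.symm]
    · simp [zT_aa hab, del_lm, hxa]
    · intro u _; by_cases h : x = b <;> simp [zT_ab hab, del_lm, h, hab]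
    · intro y h1 h2 u _; by_cases h : x = y <;> simp [zT_ac hab h1 h2, del_lm, h]
  exact this u

lemma del_zT_b (hab : a ≠ b) (u : TT α) :
    del b (zT a b u) = - lm a (zT a b (del b (del a u))) := by
  have : ∀ u, (del b ∘ₗ zT a b) u = (-(lm a ∘ₗ zT a b ∘ₗ del b ∘ₗ del a)) u := by
    apply T_ind2 hab <;> simp only [LinearMap.comp_apply, LinearMap.neg_apply]
    · simp [zT_one]
    · simp [zT_a hab, del_lm, hab.symm]
    · simp [zT_b, del_lm, hab]
    · intro y h1 h2 u _
      simp [zT_c h1 h2, del_lm, h1.symm, h2.symm]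
    · simp [zT_aa hab, del_lm, hab.symm]
    · intro u _; simp [zT_ab hab, del_lm, hab.symm]
    · intro y h1 h2 u _; simp [zT_ac hab h1 h2, del_lm, hab.symm, h2.symm]
  exact this u

lemma zT_nil (hab : a ≠ b) (u : TT α) : (zT a b u) [] = u [] := by
  have : ∀ u, (Finsupp.lapply [] ∘ₗ zT a b) u = (Finsupp.lapply [] : TT α →ₗ[ℂ] ℂ) u := by
    apply T_ind2 hab <;> simp only [LinearMap.comp_apply, Finsupp.lapply_apply]
    · simp [zT_one]
    · simp [zT_a hab]
    · simp [zT_b]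
    · intro y h1 h2 u _
      simp [zT_c h1 h2]
    · simp [zT_aa hab]
    · simp [zT_ab hab]
    · intro y h1 h2 u _; simp [zT_ac hab h1 h2]
  exact this u

lemma zT_nil_a (hab : a ≠ b) (u : TT α) : (zT a b u) [a] = u [a] := by
  have : ∀ u, (Finsupp.lapply [a] ∘ₗ zT a b) u = (Finsupp.lapply [a] : TT α →ₗ[ℂ] ℂ) u := by
    apply T_ind2 hab <;> simp only [LinearMap.comp_apply, Finsupp.lapply_apply]
    · simp [zT_one]
    · simp [zT_a hab]
    · simp [zT_b, hab]
    · intro y h1 h2 u _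
      simp [zT_c h1 h2, h1.symm]
    · simp [zT_aa hab]
    · simp [zT_ab hab]
    · intro y h1 h2 u _; simp [zT_ac hab h1 h2]
  exact this u

end Words
section Decomp

variable {α : Type} [DecidableEq α]

def isU (a b : α) : List α → Prop
  | [] => False
  | [x] => x = b
  | x :: y :: u => x = b ∨ (x = a ∧ y ≠ a ∧ isU a b u) ∨ (x ≠ a ∧ x ≠ b ∧ isU a b (y :: u))

def isK (a b : α) : List α → Prop
  | [] => True
  | [x] => x ≠ b
  | x :: y :: u => x ≠ b ∧ ((x = a ∧ y ≠ a ∧ isK a b u) ∨ (x ≠ a ∧ isK a b (y :: u)))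

def isP (a b : α) : Bool → List α → Prop
  | s, [] => s = true
  | _, [x] => x ≠ a ∧ x ≠ b
  | s, x :: y :: u => (x = a ∧ y = b ∧ isP a b (!s) u) ∨ (x ≠ a ∧ x ≠ b ∧ isK a b (y :: u))

variable {e : α → ℂ} {a b : α}

lemma isU_b (l : List α) : isU a b (b :: l) := by cases l <;> simp [isU]
lemma isU_c {x : α} (hxa : x ≠ a) (hxb : x ≠ b) (l : List α) :
    isU a b (x :: l) ↔ isU a b l := by cases l <;> simp [isU, hxa, hxb]
lemma isU_a (hab : a ≠ b) : ¬ isU a b [a] := by simp [isU, hab]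
lemma isU_aa (hab : a ≠ b) (l : List α) : ¬ isU a b (a :: a :: l) := by simp [isU, hab]
lemma isU_ay (hab : a ≠ b) {y : α} (hy : y ≠ a) (l : List α) :
    isU a b (a :: y :: l) ↔ isU a b l := by simp [isU, hab, hy]

lemma isK_b (l : List α) : ¬ isK a b (b :: l) := by cases l <;> simp [isK]
lemma isK_c {x : α} (hxa : x ≠ a) (hxb : x ≠ b) (l : List α) :
    isK a b (x :: l) ↔ isK a b l := by cases l <;> simp [isK, hxa, hxb]
lemma isK_a (hab : a ≠ b) : isK a b [a] := by simp [isK, hab]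
lemma isK_aa (hab : a ≠ b) (l : List α) : ¬ isK a b (a :: a :: l) := by simp [isK, hab]
lemma isK_ay (hab : a ≠ b) {y : α} (hy : y ≠ a) (l : List α) :
    isK a b (a :: y :: l) ↔ isK a b l := by simp [isK, hab, hy]

lemma isP_b (hab : a ≠ b) (s : Bool) (l : List α) : ¬ isP a b s (b :: l) := by
  cases l <;> simp [isP, hab.symm]
lemma isP_c {x : α} (hxa : x ≠ a) (hxb : x ≠ b) (s : Bool) (l : List α) :
    isP a b s (x :: l) ↔ isK a b l := by cases l <;> simp [isP, isK, hxa, hxb]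
lemma isP_a (s : Bool) : ¬ isP a b s [a] := by simp [isP]
lemma isP_ay {y : α} (hy : y ≠ b) (s : Bool) (l : List α) : ¬ isP a b s (a :: y :: l) := by
  simp [isP, hy]
lemma isP_ab (s : Bool) (l : List α) : isP a b s (a :: b :: l) ↔ isP a b (!s) l := by
  simp [isP]

/-- supported on words satisfying Q -/
def supp (Q : List α → Prop) : Submodule ℂ (TT α) := Finsupp.supported ℂ ℂ {l | Q l}

lemma mem_supp {Q : List α → Prop} {u : TT α} : u ∈ supp Q ↔ ∀ l, ¬ Q l → u l = 0 := by
  rw [supp, Finsupp.mem_supported']; rfl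

lemma single_mem_supp {Q : List α → Prop} {l : List α} (h : Q l) (c : ℂ) :
    Finsupp.single l c ∈ supp Q := Finsupp.single_mem_supported ℂ c h

lemma lm_mem_supp {Q Q' : List α → Prop} (x : α) (h : ∀ l, Q l → Q' (x :: l)) {u : TT α}
    (hu : u ∈ supp Q) : lm x u ∈ supp Q' := by
  rw [mem_supp] at hu ⊢
  intro l hl
  cases l with
  | nil => simp
  | cons y l =>
    rw [lm_cons]
    split_ifs with hy
    · subst hy; exact hu l (fun h' => hl (h _ h'))
    · rfl

lemma del_mem_supp {Q Q' : List α → Prop} (x : α) (h : ∀ l, Q (x :: l) → Q' l) {u : TT α}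
    (hu : u ∈ supp Q) : del x u ∈ supp Q' := by
  rw [mem_supp] at hu ⊢
  intro l hl
  rw [del_apply]
  exact hu _ (fun h' => hl (h _ h'))

lemma eq_zero_of_del {u : TT α} (h0 : u [] = 0) (h : ∀ x, del x u = 0) : u = 0 := by
  ext l
  cases l with
  | nil => simpa using h0
  | cons x l => rw [← del_apply, h x]; rfl

lemma lm_inj (x : α) {u : TT α} (h : lm x u = 0) : u = 0 := by
  have := congrArg (del x) h
  simpa [del_lm] using this

/-- bounded length -/
lemma exists_bound (u : TT α) : ∃ N, u ∈ supp (fun l => l.length < N) := by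
  refine ⟨u.support.sup List.length + 1, ?_⟩
  rw [mem_supp]
  intro l hl
  by_contra h
  apply hl
  have := Finset.le_sup (f := List.length) (Finsupp.mem_support_iff.2 h)
  omega

lemma bnd_del {N : ℕ} {u : TT α} (x : α) (hu : u ∈ supp (fun l => l.length < N + 1)) :
    del x u ∈ supp (fun l => l.length < N) :=
  del_mem_supp x (by intro l; simp) hu

lemma bnd_del2 {N : ℕ} {u : TT α} (x y : α) (hu : u ∈ supp (fun l => l.length < N + 1)) :
    del y (del x u) ∈ supp (fun l => l.length < N) :=
  del_mem_supp y (by intro l; simp; omega) (bnd_del x hu)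

lemma bnd_zero {u : TT α} (hu : u ∈ supp (fun l => l.length < 0)) : u = 0 := by
  ext l; exact mem_supp.1 hu l (by simp)

lemma U_inj (H : Dat e a b) {u : TT α} (hu : u ∈ supp (isU a b)) (h : dT e a b u = 0) : u = 0 := by
  obtain ⟨N, hN⟩ := exists_bound u
  induction N generalizing u with
  | zero => exact bnd_zero hN
  | succ N ih =>
    have hc : ∀ x, x ≠ a → x ≠ b → del x u = 0 := by
      intro x hxa hxb
      apply ih (del_mem_supp x (fun l => (isU_c hxa hxb l).1) hu) _ (bnd_del x hN)
      have := congrArg (del x) h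
      simpa [del_dT H, hxa, H.e0] using this
    have ha : del a u = 0 := by
      apply eq_zero_of_del
      · exact mem_supp.1 hu _ (isU_a H.ab)
      · intro y
        by_cases hy : y = a
        · subst hy
          ext l
          exact mem_supp.1 hu _ (isU_aa H.ab l)
        · apply ih (del_mem_supp (Q := fun l => isU a b (a :: l)) y
            (fun l => (isU_ay H.ab hy l).1) (del_mem_supp a (fun l h => h) hu)) _ (bnd_del2 a y hN)
          have := congrArg (fun v => del y (del a v)) h
          simpa [del_dT H, hy, H.e0, H.ea, del_lm] using this
    apply eq_zero_of_del
    · exact mem_supp.1 hu _ (by simp [isU])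
    · intro x
      by_cases hxa : x = a
      · subst hxa; exact ha
      by_cases hxb : x = b
      · subst hxb
        have := congrArg (del a) h
        simp [del_dT H, ha] at this
        exact lm_inj _ this
      · exact hc x hxa hxb

/-- boundaries -/
noncomputable def BB (e : α → ℂ) (a b : α) : Submodule ℂ (TT α) := LinearMap.range (dT e a b)

lemma BB_nil {y : TT α} (hy : y ∈ BB e a b) : y [] = 0 := by
  obtain ⟨t, rfl⟩ := hy; simp

lemma BB_a (H : Dat e a b) {y : TT α} (hy : y ∈ BB e a b) : y [a] = 0 := by
  obtain ⟨t, rfl⟩ := hy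
  rw [← del_apply, del_dT H]; simp

lemma BB_c (H : Dat e a b) {y : TT α} (hy : y ∈ BB e a b) {x : α} (hx : x ≠ a) :
    del x y ∈ BB e a b := by
  obtain ⟨t, rfl⟩ := hy
  rw [del_dT H]; simp only [hx, if_false, zero_add]
  exact Submodule.smul_mem _ _ ⟨_, rfl⟩

lemma BB_ay (H : Dat e a b) {y : TT α} (hy : y ∈ BB e a b) {x : α} (hx : x ≠ a) :
    del x (del a y) ∈ BB e a b := by
  obtain ⟨t, rfl⟩ := hy
  rw [del_dT H, map_add, if_pos rfl, del_lm, if_neg hx, H.ea, one_smul, zero_add]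
  exact BB_c H ⟨_, rfl⟩ hx

lemma K_inj (H : Dat e a b) {k : TT α} (hk : k ∈ supp (isK a b)) (h : zT a b k ∈ BB e a b) :
    k = 0 := by
  obtain ⟨N, hN⟩ := exists_bound k
  induction N generalizing k with
  | zero => exact bnd_zero hN
  | succ N ih =>
    have hc : ∀ x, x ≠ a → x ≠ b → del x k = 0 := by
      intro x hxa hxb
      apply ih (del_mem_supp x (fun l => (isK_c hxa hxb l).1) hk) _ (bnd_del x hN)
      rw [← del_zT_c H.ab hxa hxb]
      exact BB_c H h hxa
    have ha : del a k = 0 := by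
      apply eq_zero_of_del
      · rw [del_apply, ← zT_nil_a H.ab]; exact BB_a H h
      · intro y
        by_cases hy : y = a
        · subst hy
          ext l
          exact mem_supp.1 hk _ (isK_aa H.ab l)
        · apply ih (del_mem_supp (Q := fun l => isK a b (a :: l)) y
            (fun l => (isK_ay H.ab hy l).1) (del_mem_supp a (fun l h => h) hk)) _ (bnd_del2 a y hN)
          rw [← del_zT_ay H.ab hy]
          exact BB_ay H h hy
    apply eq_zero_of_del
    · rw [← zT_nil H.ab]; exact BB_nil h
    · intro x
      by_cases hxa : x = a
      · subst hxa; exact ha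
      by_cases hxb : x = b
      · subst hxb
        ext l
        exact mem_supp.1 hk _ (isK_b l)
      · exact hc x hxa hxb

def sn (s : Bool) : ℂ := if s then 1 else -1

lemma sn_not (s : Bool) : sn (!s) = - sn s := by cases s <;> simp [sn]
lemma sn_sq (s : Bool) : sn s * sn s = 1 := by cases s <;> simp [sn]

lemma P_inj (H : Dat e a b) (s : Bool) {k : TT α} (hk : k ∈ supp (isP a b s))
    (h : lm a (zT a b k) + sn s • rm a (zT a b k) ∈ BB e a b) : k = 0 := by
  obtain ⟨N, hN⟩ := exists_bound k
  induction N generalizing k s with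
  | zero => exact bnd_zero hN
  | succ N ih =>
    have hay : ∀ x, x ≠ b → del x (del a k) = 0 := by
      intro x hx
      ext l
      exact mem_supp.1 hk _ (isP_ay hx s l)
    have hc : ∀ x, x ≠ a → x ≠ b → del x k = 0 := by
      intro x hxa hxb
      apply K_inj H (del_mem_supp x (fun l => (isP_c hxa hxb s l).1) hk)
      have := BB_ay H h hxa
      simpa [del_lm, del_rm, hxa, del_zT_c H.ab hxa hxb, del_zT_ay H.ab hxa, hay x hxb] using this
    have hab : del b (del a k) = 0 := by
      apply ih (!s) (del_mem_supp (Q := fun l => isP a b s (a :: l)) b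
            (fun l => (isP_ab s l).1) (del_mem_supp a (fun l h => h) hk)) _ (bnd_del2 a b hN)
      have := BB_ay H h H.ab.symm
      have := Submodule.neg_mem _ this
      rw [sn_not]
      convert this using 1
      simp [del_lm, del_rm, H.ab.symm, del_zT_b H.ab, del_zT_ay H.ab H.ab.symm]
      abel
    apply eq_zero_of_del
    · cases s with
      | true =>
        have := BB_a H h
        rw [← del_apply] at this
        simp [del_lm, del_rm, sn, zT_nil H.ab] at this
        exact this
      | false => exact mem_supp.1 hk _ (by simp [isP])
    · intro x
      by_cases hxa : x = a
      · subst hxa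
        apply eq_zero_of_del
        · exact mem_supp.1 hk _ (isP_a s)
        · intro y
          by_cases hy : y = b
          · subst hy; exact hab
          · exact hay y hy
      by_cases hxb : x = b
      · subst hxb
        ext l
        exact mem_supp.1 hk _ (isP_b H.ab s l)
      · exact hc x hxa hxb

/-! spanning -/

lemma BB_d (t : TT α) : dT e a b t ∈ BB e a b := ⟨t, rfl⟩

lemma word_ind (hab : a ≠ b) {C : List α → Prop} (h0 : C []) (h1 : C [a]) (hb : ∀ l, C (b :: l))
    (hc : ∀ x, x ≠ a → x ≠ b → ∀ l, C l → C (x :: l))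
    (haa : ∀ l, C l → C (a :: a :: l))
    (hab' : ∀ l, C l → C (a :: b :: l))
    (hac : ∀ x, x ≠ a → x ≠ b → ∀ l, C l → C (a :: x :: l)) (l : List α) : C l := by
  induction hn : l.length using Nat.strong_induction_on generalizing l with
  | _ n ih =>
    match l, hn with
    | [], _ => exact h0
    | x :: l, hn =>
      by_cases hxb : x = b
      · subst hxb; exact hb _
      by_cases hxa : x = a
      · subst hxa
        match l, hn with
        | [], _ => exact h1
        | y :: l, hn =>
          have := ih l.length (by simp at hn; omega) l rfl
          by_cases hyb : y = b
          · subst hyb; exact hab' _ this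
          by_cases hya : y = x
          · subst hya; exact haa _ this
          exact hac y hya hyb _ this
      · exact hc x hxa hxb _ (ih l.length (by simp at hn; omega) l rfl)

lemma supp_top (u : TT α) : u ∈ supp (fun _ : List α => True) := by
  rw [mem_supp]; simp

lemma lm_b_U (u : TT α) : lm b u ∈ supp (isU a b) :=
  lm_mem_supp b (fun l _ => isU_b l) (supp_top u)

lemma T_decomp (H : Dat e a b) (u : TT α) :
    ∃ w ∈ supp (isU a b), ∃ k ∈ supp (isK a b), ∃ t, u = w + zT a b k + dT e a b t := by
  suffices h : u ∈ supp (isU a b) ⊔ ((supp (isK a b)).map (zT a b) ⊔ BB e a b) by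
    obtain ⟨w, hw, v, hv, rfl⟩ := Submodule.mem_sup.1 h
    obtain ⟨_, ⟨k, hk, rfl⟩, _, ⟨t, rfl⟩, rfl⟩ := Submodule.mem_sup.1 hv
    exact ⟨w, hw, k, hk, t, by abel⟩
  set S := supp (isU a b) ⊔ ((supp (isK a b)).map (zT a b) ⊔ BB e a b) with hS
  have hU : ∀ w ∈ supp (isU a b), w ∈ S := fun w hw => Submodule.mem_sup_left hw
  have hK : ∀ k ∈ supp (isK a b), zT a b k ∈ S := fun k hk =>
    Submodule.mem_sup_right (Submodule.mem_sup_left ⟨k, hk, rfl⟩)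
  have hB : ∀ t, dT e a b t ∈ S := fun t =>
    Submodule.mem_sup_right (Submodule.mem_sup_right ⟨t, rfl⟩)
  have key : ∀ f : TT α →ₗ[ℂ] TT α, (∀ w ∈ supp (isU a b), f w ∈ S) →
      (∀ k ∈ supp (isK a b), f (zT a b k) ∈ S) → (∀ t, f (dT e a b t) ∈ S) →
      ∀ u ∈ S, f u ∈ S := by
    intro f h1 h2 h3 u hu
    obtain ⟨w, hw, v, hv, rfl⟩ := Submodule.mem_sup.1 hu
    obtain ⟨_, ⟨k, hk, rfl⟩, _, ⟨t, rfl⟩, rfl⟩ := Submodule.mem_sup.1 hv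
    rw [map_add, map_add]
    exact S.add_mem (h1 _ hw) (S.add_mem (h2 _ hk) (h3 t))
  refine T_mem S ?_ u
  refine word_ind H.ab ?_ ?_ ?_ ?_ ?_ ?_ ?_
  · have := hK one0 (single_mem_supp (by simp [isK]) 1)
    rwa [zT_one] at this
  · have := hK (lm a one0) (by simpa [one0] using single_mem_supp (isK_a H.ab) 1)
    rw [zT_a H.ab] at this
    simpa [one0] using this
  · intro l; exact hU _ (single_mem_supp (isU_b l) 1)
  · intro x hxa hxb l hl
    rw [single_cons]
    refine key (lm x) ?_ ?_ ?_ _ hl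
    · intro w hw; exact hU _ (lm_mem_supp x (fun l => (isU_c hxa hxb l).2) hw)
    · intro k hk; rw [← zT_c hxa hxb]
      exact hK _ (lm_mem_supp x (fun l => (isK_c hxa hxb l).2) hk)
    · intro t
      have : lm x (dT e a b t) = e x • dT e a b (lm x t) := by
        rw [dT_c H hxb, smul_smul, H.ee, one_smul]
      rw [this]; exact S.smul_mem _ (hB _)
  · intro l _
    rw [single_cons, single_cons]
    have : ∀ v, lm a (lm a v) = dT e a b (lm b v) + lm b (dT e a b v) := by
      intro v; rw [dT_b H]; abel
    rw [this]
    exact S.add_mem (hB _) (hU _ (lm_b_U _))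
  · intro l hl
    rw [single_cons, single_cons]
    refine key (lm a ∘ₗ lm b) ?_ ?_ ?_ _ hl
    · intro w hw
      exact hU _ (lm_mem_supp (Q := fun l => isU a b (a :: l)) a (fun l h => h)
        (lm_mem_supp b (fun l => (isU_ay H.ab H.ab.symm l).2) hw))
    · intro k hk
      have : (lm a ∘ₗ lm b) (zT a b k) = zT a b (lm a (lm b k)) + lm b (lm a (zT a b k)) := by
        rw [zT_ab H.ab]; simp
      rw [this]
      exact S.add_mem (hK _ (lm_mem_supp (Q := fun l => isK a b (a :: l)) a (fun l h => h)
        (lm_mem_supp b (fun l => (isK_ay H.ab H.ab.symm l).2) hk))) (hU _ (lm_b_U _))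
    · intro t
      have : (lm a ∘ₗ lm b) (dT e a b t) = dT e a b (lm b (lm a t)) + lm b (lm a (dT e a b t))
          - dT e a b (lm a (lm b t)) := by
        simp [dT_b H, dT_a H]
      rw [this]
      exact S.sub_mem (S.add_mem (hB _) (hU _ (lm_b_U _))) (hB _)
  · intro x hxa hxb l hl
    rw [single_cons, single_cons]
    refine key (lm a ∘ₗ lm x) ?_ ?_ ?_ _ hl
    · intro w hw
      exact hU _ (lm_mem_supp (Q := fun l => isU a b (a :: l)) a (fun l h => h)
        (lm_mem_supp x (fun l => (isU_ay H.ab hxa l).2) hw))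
    · intro k hk
      simp only [LinearMap.comp_apply]
      rw [← zT_ac H.ab hxa hxb]
      exact hK _ (lm_mem_supp (Q := fun l => isK a b (a :: l)) a (fun l h => h)
        (lm_mem_supp x (fun l => (isK_ay H.ab hxa l).2) hk))
    · intro t
      have : (lm a ∘ₗ lm x) (dT e a b t) = e x • dT e a b (lm a (lm x t)) := by
        rw [dT_a H, dT_c H hxb]; simp [smul_smul, H.ee]
      rw [this]; exact S.smul_mem _ (hB _)

lemma Z_decomp (H : Dat e a b) (u : TT α) (hu : dT e a b u = 0) :
    ∃ k ∈ supp (isK a b), ∃ t, u = zT a b k + dT e a b t := by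
  obtain ⟨w, hw, k, hk, t, rfl⟩ := T_decomp H u
  have : w = 0 := U_inj H hw (by simpa [dT_zT H, dd0 H] using hu)
  exact ⟨k, hk, t, by simp [this]⟩

/-- cocycles `z` with `az + s za` exact -/
noncomputable def NN (e : α → ℂ) (a b : α) (s : Bool) : Submodule ℂ (TT α) :=
  LinearMap.ker (dT e a b) ⊓ (BB e a b).comap (lm a + sn s • rm a)

lemma mem_NN {s : Bool} {z : TT α} : z ∈ NN e a b s ↔
    dT e a b z = 0 ∧ lm a z + sn s • rm a z ∈ BB e a b := by
  simp [NN]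

lemma BB_le_NN (H : Dat e a b) (s : Bool) (t : TT α) : dT e a b t ∈ NN e a b s := by
  rw [mem_NN]
  refine ⟨dd0 H t, ⟨lm a t + sn s • rm a t, ?_⟩⟩
  simp [dT_a H, dT_rm H]

lemma K_decomp_word (H : Dat e a b) (l : List α) : ∀ s : Bool,
    zT a b (Finsupp.single l 1) ∈ (supp (isP a b s)).map (zT a b) ⊔ NN e a b s := by
  refine word_ind (C := fun l => ∀ s : Bool, zT a b (Finsupp.single l 1) ∈
    (supp (isP a b s)).map (zT a b) ⊔ NN e a b s) H.ab ?_ ?_ ?_ ?_ ?_ ?_ ?_ l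
  · intro s
    cases s with
    | true => exact Submodule.mem_sup_left ⟨_, single_mem_supp (by simp [isP]) 1, rfl⟩
    | false =>
      apply Submodule.mem_sup_right
      change zT a b one0 ∈ _
      rw [zT_one, mem_NN]
      simp [dT_one, rm_one, sn]
  · intro s
    apply Submodule.mem_sup_right
    rw [single_cons]
    change zT a b (lm a one0) ∈ _
    rw [zT_a H.ab, mem_NN]
    refine ⟨by simp [dT_a H, dT_one], ⟨(1 + sn s) • lm b one0, ?_⟩⟩
    simp [dT_b H, dT_one, rm_one, rm_lm, add_smul]
  · intro l s
    rw [single_cons, zT_b]; exact Submodule.zero_mem _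
  · intro x hxa hxb l _ s
    by_cases hl : isK a b l
    · exact Submodule.mem_sup_left ⟨_, single_mem_supp ((isP_c hxa hxb s l).2 hl) 1, rfl⟩
    · rw [single_cons, zT_c hxa hxb]
      obtain ⟨k, hk, t, ht⟩ := Z_decomp H _ (dT_zT H (Finsupp.single l 1))
      rw [ht, map_add, ← zT_c hxa hxb]
      have : lm x (dT e a b t) = dT e a b (e x • lm x t) := by
        rw [map_smul, dT_c H hxb, smul_smul, H.ee, one_smul]
      rw [this]
      exact Submodule.add_mem_sup ⟨_, lm_mem_supp x (fun l => (isP_c hxa hxb s l).2) hk, rfl⟩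
        (BB_le_NN H s _)
  · intro l _ s
    rw [single_cons, single_cons, zT_aa H.ab]; exact Submodule.zero_mem _
  · intro l hl s
    rw [single_cons, single_cons, zT_ab H.ab]
    obtain ⟨_, ⟨p, hp, rfl⟩, n, hn, h⟩ := Submodule.mem_sup.1 (hl (!s))
    rw [← h]
    have : lm a (lm b (zT a b p + n)) - lm b (lm a (zT a b p + n)) =
        zT a b (lm a (lm b p)) + (lm a (lm b n) - lm b (lm a n)) := by
      rw [zT_ab H.ab]; simp only [map_add]; abel
    rw [this]
    refine Submodule.add_mem_sup ⟨_, lm_mem_supp (Q := fun l => isP a b s (a :: l)) a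
      (fun l h => h) (lm_mem_supp b (fun l => (isP_ab s l).2) hp), rfl⟩ ?_
    rw [mem_NN] at hn ⊢
    obtain ⟨hn1, ⟨t, ht⟩⟩ := hn
    refine ⟨by simp [dT_a H, dT_b H, hn1], ?_⟩
    refine ⟨lm b (lm b n) + lm a (lm b t) - lm b (lm a t), ?_⟩
    rw [sn_not] at ht
    simp only [map_add, map_sub, dT_a H, dT_b H, hn1, ht, rm_lm, smul_sub, map_smul, neg_smul,
      map_neg, map_zero]
    abel
  · intro x hxa hxb l _ s
    rw [single_cons, single_cons, zT_ac H.ab hxa hxb]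
    set v := zT a b (Finsupp.single l 1) with hv
    have hv0 : dT e a b v = 0 := dT_zT H _
    obtain ⟨k, hk, t, ht⟩ := Z_decomp H (rm a v) (by rw [dT_rm H, hv0, map_zero])
    have hs0 : dT e a b (lm x v) = 0 := by simp [dT_c H hxb, hv0]
    set w := lm x v with hw
    have e1 : rm a w = zT a b (lm x k) + dT e a b (e x • lm x t) := by
      rw [map_smul, dT_c H hxb, smul_smul, H.ee, one_smul, hw, rm_lm, ht, map_add, zT_c hxa hxb]
    have e2 : lm a w = zT a b (sn s • lm x k) + (dT e a b (sn s • e x • lm x t)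
        + (lm a w - sn s • rm a w)) := by
      rw [e1]; simp only [map_smul, smul_add]; abel
    rw [e2]
    refine Submodule.add_mem_sup ⟨_, Submodule.smul_mem _ _
      (lm_mem_supp x (fun l => (isP_c hxa hxb s l).2) hk), rfl⟩
      (Submodule.add_mem _ (BB_le_NN H s _) ?_)
    rw [mem_NN]
    refine ⟨by simp [dT_a H, dT_rm H, hs0], ?_⟩
    refine ⟨lm b w - hT e b w, ?_⟩
    simp only [map_sub, dT_b H, dT_hT H, hs0, map_zero, sub_zero, map_smul, smul_sub, smul_smul,
      sn_sq, one_smul, rm_lm]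
    abel

lemma K_decomp (H : Dat e a b) (s : Bool) (k : TT α) :
    zT a b k ∈ (supp (isP a b s)).map (zT a b) ⊔ NN e a b s := by
  have := T_mem (((supp (isP a b s)).map (zT a b) ⊔ NN e a b s).comap (zT a b))
    (fun l => K_decomp_word H l s) k
  exact this

/-! The pair complex -/

noncomputable def DD (e : α → ℂ) (a b : α) : TT α × TT α →ₗ[ℂ] TT α × TT α :=
  LinearMap.prod (dT e a b ∘ₗ sg e ∘ₗ LinearMap.fst ℂ _ _)
    ((lm a + rm a) ∘ₗ LinearMap.fst ℂ _ _ - dT e a b ∘ₗ sg e ∘ₗ LinearMap.snd ℂ _ _)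

lemma DD_apply (u v : TT α) : DD e a b (u, v) =
    (dT e a b (sg e u), lm a u + rm a u - dT e a b (sg e v)) := by
  simp [DD]

noncomputable def GG (a b : α) : TT α × TT α × TT α →ₗ[ℂ] TT α × TT α :=
  LinearMap.prod (LinearMap.fst ℂ _ _ + zT a b ∘ₗ LinearMap.snd ℂ _ _ ∘ₗ LinearMap.snd ℂ _ _)
    (LinearMap.fst ℂ _ _ ∘ₗ LinearMap.snd ℂ _ _)

lemma GG_apply (u v x : TT α) : GG a b (u, v, x) = (u + zT a b x, v) := by
  simp [GG]

lemma sg_inj (H : Dat e a b) {u : TT α} (h : sg e u = 0) : u = 0 := by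
  rw [← sg_sg H u, h, map_zero]

lemma dT_sg_zero (H : Dat e a b) (u : TT α) : dT e a b (sg e u) = 0 ↔ dT e a b u = 0 := by
  rw [dT_sg H]
  constructor
  · intro h; exact sg_inj H (by simpa using h)
  · intro h; simp [h]

lemma DD_DD (H : Dat e a b) (p : TT α × TT α) : DD e a b (DD e a b p) = 0 := by
  obtain ⟨u, v⟩ := p
  rw [DD_apply, DD_apply]
  ext1
  · simp [dT_sg H, dd0 H]
  · simp [dT_sg H, dd0 H, dT_a H, dT_rm H, sg_lm, sg_rm H, H.ea]

lemma DG_inj (H : Dat e a b) {u v x : TT α} (hu : u ∈ supp (isU a b)) (hv : v ∈ supp (isU a b))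
    (hx : x ∈ supp (isP a b true)) (h : DD e a b (GG a b (u, v, x)) = 0) :
    u = 0 ∧ v = 0 ∧ x = 0 := by
  rw [GG_apply, DD_apply, Prod.mk_eq_zero] at h
  obtain ⟨h1, h2⟩ := h
  rw [dT_sg_zero H, map_add, dT_zT H, add_zero] at h1
  have hu0 := U_inj H hu h1
  subst hu0
  rw [zero_add, sub_eq_zero] at h2
  have hx0 : x = 0 := P_inj H true hx ⟨sg e v, by simp [sn, h2]⟩
  subst hx0
  simp only [map_zero, add_zero] at h2
  exact ⟨rfl, U_inj H hv ((dT_sg_zero H v).1 h2.symm), rfl⟩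

lemma DG_span (H : Dat e a b) (p : TT α × TT α) :
    ∃ u ∈ supp (isU a b), ∃ v ∈ supp (isU a b), ∃ x ∈ supp (isP a b true),
      DD e a b p = DD e a b (GG a b (u, v, x)) := by
  obtain ⟨u, v⟩ := p
  obtain ⟨w, hw, k, hk, t, rfl⟩ := T_decomp H u
  obtain ⟨_, ⟨x, hx, rfl⟩, n, hn, hkn⟩ := Submodule.mem_sup.1 (K_decomp H true k)
  have hn' := Submodule.add_mem _ hn (BB_le_NN H true t)
  rw [mem_NN] at hn'
  obtain ⟨hn1, ⟨y, hy⟩⟩ := hn'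
  obtain ⟨v', hv', k', hk', t', hv⟩ := T_decomp H (v - sg e y)
  refine ⟨w, hw, v', hv', x, hx, ?_⟩
  have e1 : w + zT a b k + dT e a b t = (w + zT a b x) + (n + dT e a b t) := by
    rw [← hkn]; abel
  set n' := n + dT e a b t with hn'
  have e2 : v = v' + (zT a b k' + dT e a b t') + sg e y := by
    rw [← add_assoc, ← hv]; abel
  have e3 : dT e a b (sg e (zT a b k' + dT e a b t')) = 0 := by
    rw [dT_sg_zero H]; simp [dT_zT H, dd0 H]
  have e4 : dT e a b (sg e n') = 0 := (dT_sg_zero H _).2 hn1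
  rw [e1, e2, GG_apply, DD_apply, DD_apply]
  ext1
  · simp only [map_add (dT e a b), map_add (sg e)] at e4 ⊢
    rw [e4]; simp
  · have : dT e a b (sg e (v' + (zT a b k' + dT e a b t') + sg e y)) =
        dT e a b (sg e v') + dT e a b y := by
      rw [map_add (sg e), map_add (sg e), map_add (dT e a b), map_add (dT e a b), e3, sg_sg H,
        add_zero]
    simp only [this, hy, sn]
    simp only [map_add, if_true, one_smul]
    abel

end Decomp
section Graded

variable {α : Type} [DecidableEq α]

noncomputable def prj (n : ℕ) : TT α →ₗ[ℂ] TT α :=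
  Finsupp.linearCombination ℂ (fun l => if l.length = n then Finsupp.single l 1 else 0)

lemma prj_single (n : ℕ) (l : List α) :
    prj n (Finsupp.single l 1 : TT α) = if l.length = n then Finsupp.single l 1 else 0 := by
  simp [prj]

lemma prj_apply (n : ℕ) (u : TT α) (l : List α) :
    prj n u l = if l.length = n then u l else 0 := by
  have : ∀ u, (Finsupp.lapply l ∘ₗ prj n) u =
      (if l.length = n then Finsupp.lapply l else 0 : TT α →ₗ[ℂ] ℂ) u := by
    apply T_ext
    intro l'
    simp only [LinearMap.comp_apply, prj_single, Finsupp.lapply_apply]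
    by_cases h : l' = l
    · subst h; by_cases h2 : l'.length = n <;> simp [h2]
    · by_cases h2 : l'.length = n <;> by_cases h3 : l.length = n <;>
        simp [h2, h3, Finsupp.single_apply, h]
  have h := this u
  split_ifs at h ⊢ <;> simpa using h

def Tn (α : Type) (n : ℕ) : Submodule ℂ (TT α) := supp (fun l : List α => l.length = n)

lemma prj_mem {Q : List α → Prop} (n : ℕ) {u : TT α} (hu : u ∈ supp Q) :
    prj n u ∈ supp (fun l => l.length = n ∧ Q l) := by
  rw [mem_supp] at hu ⊢
  intro l hl
  rw [prj_apply]
  split_ifs with h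
  · exact hu l (fun h' => hl ⟨h, h'⟩)
  · rfl

lemma prj_eq {n : ℕ} {u : TT α} (hu : u ∈ Tn α n) : prj n u = u := by
  ext l
  rw [prj_apply]
  split_ifs with h
  · rfl
  · exact (mem_supp.1 hu l h).symm

lemma prj_ne {n k : ℕ} (hnk : n ≠ k) {u : TT α} (hu : u ∈ Tn α n) : prj k u = 0 := by
  ext l
  rw [prj_apply]
  split_ifs with h
  · exact (mem_supp.1 hu l (by omega))
  · rfl

lemma prj_comm {f : TT α →ₗ[ℂ] TT α} {k : ℕ}
    (hf : ∀ l, f (Finsupp.single l 1) ∈ Tn α (l.length + k)) (n : ℕ) (u : TT α) :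
    prj (n + k) (f u) = f (prj n u) := by
  have : ∀ u, (prj (n + k) ∘ₗ f) u = (f ∘ₗ prj n) u := by
    apply T_ext
    intro l
    simp only [LinearMap.comp_apply, prj_single]
    split_ifs with h
    · subst h; exact prj_eq (hf l)
    · rw [map_zero]; exact prj_ne (by omega) (hf l)
  exact this u

lemma lm_Tn (x : α) {n : ℕ} {u : TT α} (hu : u ∈ Tn α n) : lm x u ∈ Tn α (n + 1) :=
  lm_mem_supp x (by simp) hu

lemma single_Tn (l : List α) (c : ℂ) : Finsupp.single l c ∈ Tn α l.length :=
  single_mem_supp (Q := fun l' : List α => l'.length = l.length) rfl c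

lemma dW_Tn (e : α → ℂ) (a b : α) (l : List α) : dW e a b l ∈ Tn α (l.length + 1) := by
  induction l with
  | nil => exact Submodule.zero_mem _
  | cons x l ih =>
    rw [dW]
    refine Submodule.add_mem _ ?_ (Submodule.smul_mem _ _ (lm_Tn x ih))
    split_ifs
    · exact lm_Tn a (lm_Tn a (single_Tn l 1))
    · exact Submodule.zero_mem _

lemma zW_Tn {a b : α} (hab : a ≠ b) (l : List α) : zT a b (Finsupp.single l 1) ∈ Tn α (l.length + 0) := by
  refine word_ind (C := fun l => zT a b (Finsupp.single l 1) ∈ Tn α (l.length + 0))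
    hab ?_ ?_ ?_ ?_ ?_ ?_ ?_ l
  · change zT a b one0 ∈ _
    rw [zT_one]; exact single_Tn [] 1
  · rw [single_cons]
    change zT a b (lm a one0) ∈ _
    rw [zT_a hab]; exact lm_Tn a (single_Tn [] 1)
  · intro l; rw [single_cons, zT_b]; exact Submodule.zero_mem _
  · intro x h1 h2 l hl; rw [single_cons, zT_c h1 h2]; exact lm_Tn x hl
  · intro l hl; rw [single_cons, single_cons, zT_aa hab]; exact Submodule.zero_mem _
  · intro l hl; rw [single_cons, single_cons, zT_ab hab]
    exact Submodule.sub_mem _ (lm_Tn a (lm_Tn b hl)) (lm_Tn b (lm_Tn a hl))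
  · intro x h1 h2 l hl; rw [single_cons, single_cons, zT_ac hab h1 h2]
    exact lm_Tn a (lm_Tn x hl)

variable {e : α → ℂ} {a b : α}

lemma prj_dT (n : ℕ) (u : TT α) : prj (n + 1) (dT e a b u) = dT e a b (prj n u) :=
  prj_comm (fun l => by simpa [dT] using dW_Tn e a b l) n u

lemma prj_zT (hab : a ≠ b) (n : ℕ) (u : TT α) : prj n (zT a b u) = zT a b (prj n u) :=
  prj_comm (k := 0) (zW_Tn hab) n u

lemma prj_sg (n : ℕ) (u : TT α) : prj n (sg e u) = sg e (prj n u) :=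
  prj_comm (k := 0) (fun l => by simpa [sg] using single_Tn l _) n u

lemma prj_lm (x : α) (n : ℕ) (u : TT α) : prj (n + 1) (lm x u) = lm x (prj n u) :=
  prj_comm (fun l => lm_Tn x (single_Tn l 1)) n u

lemma prj_rm (x : α) (n : ℕ) (u : TT α) : prj (n + 1) (rm x u) = rm x (prj n u) :=
  prj_comm (fun l => by simpa using single_Tn (l ++ [x]) 1) n u

lemma prj_DD (n : ℕ) (p : TT α × TT α) :
    (prj n.succ).prodMap (prj n.succ) (DD e a b p) = DD e a b ((prj n).prodMap (prj n) p) := by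
  obtain ⟨u, v⟩ := p
  simp [DD_apply, prj_dT, prj_sg, prj_lm, prj_rm]

/-- parametrization of the image of `DD` in degree `n` -/
noncomputable def Phi (e : α → ℂ) (a b : α) (n : ℕ) :
    (supp (fun l => l.length = n ∧ isU a b l)) × (supp (fun l => l.length = n ∧ isU a b l)) ×
      (supp (fun l => l.length = n ∧ isP a b true l)) →ₗ[ℂ] TT α × TT α :=
  DD e a b ∘ₗ GG a b ∘ₗ
    (LinearMap.prodMap (Submodule.subtype _)
      (LinearMap.prodMap (Submodule.subtype _) (Submodule.subtype _)))

lemma supp_mono {Q Q' : List α → Prop} (h : ∀ l, Q l → Q' l) {u : TT α} (hu : u ∈ supp Q) :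
    u ∈ supp Q' := by
  rw [mem_supp] at *
  exact fun l hl => hu l (fun h' => hl (h l h'))

lemma Phi_inj (H : Dat e a b) (n : ℕ) : Function.Injective (Phi e a b n) := by
  rw [injective_iff_map_eq_zero]
  rintro ⟨⟨u, hu⟩, ⟨v, hv⟩, ⟨x, hx⟩⟩ h
  obtain ⟨rfl, rfl, rfl⟩ := DG_inj H (supp_mono (fun _ h => h.2) hu)
    (supp_mono (fun _ h => h.2) hv) (supp_mono (fun _ h => h.2) hx) h
  rfl

lemma Phi_range (H : Dat e a b) (n : ℕ) :
    LinearMap.range (Phi e a b n) = ((Tn α n).prod (Tn α n)).map (DD e a b) := by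
  apply le_antisymm
  · rintro _ ⟨⟨⟨u, hu⟩, ⟨v, hv⟩, ⟨x, hx⟩⟩, rfl⟩
    refine ⟨GG a b (u, v, x), ?_, rfl⟩
    rw [GG_apply]
    refine ⟨Submodule.add_mem _ (supp_mono (fun _ h => h.1) hu) ?_, supp_mono (fun _ h => h.1) hv⟩
    have hx' : x ∈ Tn α n := supp_mono (fun _ h => h.1) hx
    rw [← prj_eq hx', ← prj_zT H.ab]
    exact supp_mono (fun _ h => h.1) (prj_mem n (supp_top _))
  · rintro _ ⟨⟨p1, p2⟩, ⟨h1, h2⟩, rfl⟩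
    obtain ⟨u, hu, v, hv, x, hx, h⟩ := DG_span H (p1, p2)
    refine ⟨⟨⟨prj n u, prj_mem n hu⟩, ⟨prj n v, prj_mem n hv⟩, ⟨prj n x, prj_mem n hx⟩⟩, ?_⟩
    have h3 := congrArg ((prj n.succ).prodMap (prj n.succ)) h
    rw [prj_DD, prj_DD] at h3
    have h4 : (prj n).prodMap (prj n) (p1, p2) = (p1, p2) := by
      simp [prj_eq h1, prj_eq h2]
    rw [h4] at h3
    rw [h3]
    simp [Phi, GG_apply, prj_zT H.ab]

/-! counting -/

noncomputable def cnt (Q : List α → Prop) (n : ℕ) : ℕ := Nat.card {l : List α // l.length = n ∧ Q l}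

variable [Fintype α]

instance fin_len (Q : List α → Prop) (n : ℕ) : Finite {l : List α // l.length = n ∧ Q l} :=
  Set.Finite.subset (List.finite_length_eq α n) (fun _ h => h.1)

instance fin_supp (Q : List α → Prop) (n : ℕ) :
    Module.Finite ℂ (supp (fun l => l.length = n ∧ Q l)) :=
  haveI : Finite ({l | l.length = n ∧ Q l} : Set (List α)) := fin_len Q n
  Module.Finite.equiv (Finsupp.supportedEquivFinsupp (R := ℂ) (M := ℂ)
    {l | l.length = n ∧ Q l}).symm

lemma finrank_supp (Q : List α → Prop) (n : ℕ) :
    Module.finrank ℂ (supp (fun l => l.length = n ∧ Q l)) = cnt Q n := by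
  haveI : Finite ({l | l.length = n ∧ Q l} : Set (List α)) := fin_len Q n
  haveI := Fintype.ofFinite ({l | l.length = n ∧ Q l} : Set (List α))
  rw [supp, LinearEquiv.finrank_eq (Finsupp.supportedEquivFinsupp (R := ℂ) (M := ℂ)
    {l | l.length = n ∧ Q l}), Module.finrank_finsupp_self, cnt, ← Nat.card_eq_fintype_card]
  rfl

lemma finrank_DD (H : Dat e a b) (n : ℕ) :
    Module.finrank ℂ (((Tn α n).prod (Tn α n)).map (DD e a b)) =
      2 * cnt (isU a b) n + cnt (isP a b true) n := by
  rw [← Phi_range H, LinearMap.finrank_range_of_inj (Phi_inj H n), Module.finrank_prod,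
    Module.finrank_prod, finrank_supp, finrank_supp]
  ring

lemma cnt_congr {Q Q' : List α → Prop} (h : ∀ l, Q l ↔ Q' l) (n : ℕ) : cnt Q n = cnt Q' n := by
  have : Q = Q' := funext fun l => propext (h l)
  rw [this]

lemma cnt_false (n : ℕ) {Q : List α → Prop} (h : ∀ l, ¬ Q l) : cnt Q n = 0 := by
  unfold cnt
  haveI : IsEmpty {l : List α // l.length = n ∧ Q l} := ⟨fun l => h _ l.2.2⟩
  simp

lemma cnt_zero_true {Q : List α → Prop} (h : Q []) : cnt Q 0 = 1 := by
  unfold cnt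
  rw [Nat.card_eq_one_iff_unique]
  refine ⟨⟨?_⟩, ⟨⟨[], rfl, h⟩⟩⟩
  rintro ⟨l, h1, _⟩ ⟨l', h1', _⟩
  simp at h1 h1'
  subst h1 h1'; rfl

lemma cnt_zero_false {Q : List α → Prop} (h : ¬ Q []) : cnt Q 0 = 0 := by
  unfold cnt
  haveI : IsEmpty {l : List α // l.length = 0 ∧ Q l} := ⟨by
    rintro ⟨l, h1, h2⟩
    simp at h1
    subst h1; exact h h2⟩
  exact Nat.card_of_isEmpty

lemma cnt_succ (Q : List α → Prop) (n : ℕ) :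
    cnt Q (n + 1) = ∑ y : α, cnt (fun l => Q (y :: l)) n := by
  unfold cnt
  rw [← Nat.card_sigma]
  refine Nat.card_congr ⟨fun l => ?_, fun p => ⟨p.1 :: p.2.1, by simp [p.2.2.1], p.2.2.2⟩, ?_, ?_⟩
  · obtain ⟨l, h⟩ := l
    match l, h with
    | y :: l, h => exact ⟨y, l, by simpa using h.1, h.2⟩
  · rintro ⟨l, h⟩
    match l, h with
    | y :: l, h => rfl
  · rintro ⟨y, l, h⟩; rfl

lemma cnt_top (n : ℕ) {Q : List α → Prop} (h : ∀ l, Q l) : cnt Q n = (Fintype.card α) ^ n := by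
  induction n generalizing Q with
  | zero => exact cnt_zero_true (h _)
  | succ n ih =>
    rw [cnt_succ, Finset.sum_congr rfl (fun y _ => ih (fun l => h (y :: l)))]
    simp [pow_succ, mul_comm]

lemma sum_split {p : ℕ} (hab : a ≠ b) (hp : Fintype.card α = p + 2) (f : α → ℕ) (g : ℕ)
    (h : ∀ y, y ≠ a → y ≠ b → f y = g) : ∑ y, f y = f a + f b + p * g := by
  rw [← Finset.add_sum_erase _ f (Finset.mem_univ a),
    ← Finset.add_sum_erase (Finset.univ.erase a) f (a := b) (by simp [hab.symm]),
    Finset.sum_congr rfl (g := fun _ => g)]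
  · have : ((Finset.univ.erase a).erase b).card = p := by
      rw [Finset.card_erase_of_mem (by simp [hab.symm]), Finset.card_erase_of_mem (by simp)]
      rw [Finset.card_univ]; omega
    simp [this, add_assoc]
  · intro y hy
    simp at hy
    exact h y hy.2 hy.1

variable {p : ℕ}

lemma cntU_rec (hab : a ≠ b) (hp : Fintype.card α = p + 2) (n : ℕ) :
    cnt (isU a b) (n + 2) = (p + 1) * cnt (isU a b) n + (p + 2) ^ (n + 1)
      + p * cnt (isU a b) (n + 1) := by
  rw [cnt_succ, sum_split hab hp _ _ (fun y h1 h2 => cnt_congr (isU_c h1 h2) _),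
    cnt_top _ isU_b, hp, cnt_succ,
    sum_split hab hp _ _ (fun y h1 h2 => cnt_congr (isU_ay hab h1) _),
    cnt_false _ (isU_aa hab), cnt_congr (isU_ay hab hab.symm)]
  ring

lemma cntK_rec (hab : a ≠ b) (hp : Fintype.card α = p + 2) (n : ℕ) :
    cnt (isK a b) (n + 2) = (p + 1) * cnt (isK a b) n + p * cnt (isK a b) (n + 1) := by
  rw [cnt_succ, sum_split hab hp _ _ (fun y h1 h2 => cnt_congr (isK_c h1 h2) _),
    cnt_false _ isK_b, cnt_succ,
    sum_split hab hp _ _ (fun y h1 h2 => cnt_congr (isK_ay hab h1) _),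
    cnt_false _ (isK_aa hab), cnt_congr (isK_ay hab hab.symm)]
  ring

lemma cntP_rec (hab : a ≠ b) (hp : Fintype.card α = p + 2) (s : Bool) (n : ℕ) :
    cnt (isP a b s) (n + 2) = cnt (isP a b (!s)) n + p * cnt (isK a b) (n + 1) := by
  rw [cnt_succ, sum_split hab hp _ _ (fun y h1 h2 => cnt_congr (isP_c h1 h2 s) _),
    cnt_false _ (isP_b hab s), cnt_succ,
    sum_split hab hp _ 0 (fun y h1 h2 => cnt_false _ (isP_ay h2 s)),
    cnt_false _ (isP_ay hab s), cnt_congr (isP_ab s)]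
  ring

lemma cntU_one (hab : a ≠ b) (hp : Fintype.card α = p + 2) : cnt (isU a b) 1 = 1 := by
  rw [cnt_succ, sum_split hab hp _ _ (fun y h1 h2 => cnt_congr (isU_c h1 h2) _),
    cnt_zero_false (Q := fun l => isU a b (a :: l)) (isU_a hab),
    cnt_zero_true (Q := fun l => isU a b (b :: l)) (isU_b _),
    cnt_zero_false (Q := isU a b) (by simp [isU])]
  ring

lemma cntK_one (hab : a ≠ b) (hp : Fintype.card α = p + 2) : cnt (isK a b) 1 = p + 1 := by
  rw [cnt_succ, sum_split hab hp _ _ (fun y h1 h2 => cnt_congr (isK_c h1 h2) _),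
    cnt_zero_true (Q := fun l => isK a b (a :: l)) (isK_a hab),
    cnt_zero_false (Q := fun l => isK a b (b :: l)) (isK_b _),
    cnt_zero_true (Q := isK a b) (by simp [isK])]
  ring

lemma cntP_one (hab : a ≠ b) (hp : Fintype.card α = p + 2) (s : Bool) :
    cnt (isP a b s) 1 = p := by
  rw [cnt_succ, sum_split hab hp _ _ (fun y h1 h2 => cnt_congr (isP_c h1 h2 s) _),
    cnt_zero_false (isP_a s), cnt_zero_false (isP_b hab s _), cnt_zero_true (by simp [isK])]
  ring

lemma cntK (hab : a ≠ b) (hp : Fintype.card α = p + 2) (n : ℕ) :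
    cnt (isK a b) n = (p + 1) ^ n := by
  induction n using Nat.twoStepInduction with
  | zero => exact cnt_zero_true (by simp [isK])
  | one => rw [cntK_one hab hp, pow_one]
  | more n h1 h2 => rw [cntK_rec hab hp, h1, h2]; ring

lemma cntU_zero : cnt (isU a b) 0 = 0 := cnt_zero_false (by simp [isU])
lemma cntP_zero : cnt (isP a b true) 0 = 1 := cnt_zero_true (by simp [isP])
lemma cntP_zero' : cnt (isP a b false) 0 = 0 := cnt_zero_false (by simp [isP])

lemma cntU (hab : a ≠ b) (hp : Fintype.card α = p + 2) (n : ℕ) :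
    cnt (isU a b) (n + 1) + cnt (isU a b) n + (p + 1) ^ (n + 1) = (p + 2) ^ (n + 1) := by
  induction n with
  | zero => rw [cntU_one hab hp, cntU_zero]; ring
  | succ n ih =>
    rw [cntU_rec hab hp]
    have : (p + 1) * cnt (isU a b) n + (p + 2) ^ (n + 1) + p * cnt (isU a b) (n + 1) +
      cnt (isU a b) (n + 1) + (p + 1) ^ (n + 1 + 1) = (p + 1) * (cnt (isU a b) (n + 1) +
      cnt (isU a b) n + (p + 1) ^ (n + 1)) + (p + 2) ^ (n + 1) := by ring
    rw [this, ih]; ring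

lemma cntP (hab : a ≠ b) (hp : Fintype.card α = p + 2) (n : ℕ) :
    cnt (isP a b true) (n + 1) + cnt (isP a b true) n +
      (if (n + 1) % 4 = 0 ∨ (n + 1) % 4 = 1 then 0 else 1) = (p + 1) ^ (n + 1) := by
  induction n using Nat.strong_induction_on with
  | _ n ih =>
    match n, ih with
    | 0, _ => simp [cntP_one hab hp, cntP_zero]
    | 1, _ =>
      simp [cntP_one hab hp, cntP_zero', cntP_rec hab hp, cntK_one hab hp]; ring
    | 2, _ =>
      simp [cntP_one hab hp, cntP_zero', cntP_rec hab hp true, cntK hab hp]; ring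
    | 3, _ =>
      have h1 := cntP_rec hab hp true 2
      have h2 := cntP_rec hab hp false 0
      have h3 := cntP_rec hab hp true 1
      simp [cntP_one hab hp, cntP_zero, cntK hab hp] at h1 h2 h3
      simp [h1, h2, h3]; ring
    | n + 4, ih =>
      have h := ih n (by omega)
      have h1 := cntP_rec hab hp true (n + 2)
      have h2 := cntP_rec hab hp false n
      have h3 := cntP_rec hab hp true (n + 3)
      have h4 := cntP_rec hab hp false (n + 1)
      simp only [Bool.not_true, Bool.not_false, cntK hab hp] at h1 h2 h3 h4
      have e1 : (n + 4 + 1) % 4 = (n + 1) % 4 := by omega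
      rw [e1, show n + 4 + 1 = n + 3 + 2 by ring, h3, h4, show n + 4 = n + 2 + 2 by ring, h1, h2]
      have : (p + 1) ^ (n + 3 + 2) = (p + 1) ^ (n + 1) + p * (p + 1) ^ (n + 1) +
        p * (p + 1) ^ (n + 1 + 1) + p * (p + 1) ^ (n + 2 + 1) + p * (p + 1) ^ (n + 3 + 1) := by
        ring
      rw [this, ← h]
      have e2 : n + 1 + 2 = n + 3 := by ring
      ring

end Graded

section Bridge

variable {m : ℕ}

noncomputable def io (x : Fin m) : TT (Fin m) →ₗ[ℂ] Cochain m :=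
  Finsupp.lmapDomain ℂ ℂ (fun l => (l, x))

lemma io_single (x : Fin m) (l : List (Fin m)) (c : ℂ) :
    io x (Finsupp.single l c) = Finsupp.single (l, x) c := by
  simp [io]

noncomputable def ev (r : ℕ) (x : Fin m) : ℂ := (-1) ^ (par r x)

lemma ev_prod (r : ℕ) (I : List (Fin m)) : (I.map (ev r)).prod = (-1) ^ (lpar r I) := by
  induction I with
  | nil => simp [lpar]
  | cons y I ih =>
    rw [List.map_cons, List.prod_cons, ih]
    simp [lpar, ev, pow_add]

noncomputable def lmC (y : Fin m) : Cochain m →ₗ[ℂ] Cochain m :=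
  Finsupp.lmapDomain ℂ ℂ (fun p => (y :: p.1, p.2))

lemma lmC_single (y : Fin m) (p : List (Fin m) × Fin m) (c : ℂ) :
    lmC y (Finsupp.single p c) = Finsupp.single (y :: p.1, p.2) c := by
  simp [lmC]

lemma io_lm (x y : Fin m) (u : TT (Fin m)) : io x (lm y u) = lmC y (io x u) := by
  have : io x ∘ₗ lm y = lmC y ∘ₗ io x := LinearMap.ext (T_ext (fun l => by
    simp only [LinearMap.comp_apply, lm_single, io_single, lmC_single]))
  exact LinearMap.congr_fun this u

lemma comp_single (r : ℕ) (p q : List (Fin m) × Fin m) :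
    comp r (Finsupp.single p 1) (Finsupp.single q 1) = basisComp r p q := by
  simp [comp]

lemma twist_single (r : ℕ) (p : List (Fin m) × Fin m) :
    twist r (Finsupp.single p 1) = ((-1 : ℂ) ^ (ppar r p)) • Finsupp.single p 1 := by
  simp [twist]

variable {r : ℕ} {a b : Fin m}

lemma bc_cons (ha : par r a = 0) (hb : par r b = 1) (y : Fin m) (I : List (Fin m)) (x : Fin m) :
    basisComp r (y :: I, x) ([a, a], b) =
      (if y = b then ((-1 : ℂ) ^ (par r y)) • Finsupp.single (a :: a :: I, x) (1 : ℂ) else 0) +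
      ((-1 : ℂ) ^ (par r y)) • lmC y (basisComp r (I, x) ([a, a], b)) := by
  have hq : ppar r ([a, a], b) = 1 := by simp [ppar, lpar, ha, hb]
  unfold basisComp
  refine (Fin.sum_univ_succ (n := I.length) _).trans ?_
  rw [hq]
  congr 1
  · simp [insertAt, lpar]
  · rw [map_sum, Finset.smul_sum]
    refine Finset.sum_congr rfl (fun k _ => ?_)
    by_cases h : I.get k = b
    · have h2 : (y :: I).get k.succ = b := h
      rw [if_pos h, if_pos h2]
      simp only [map_smul, lmC_single, smul_smul, ← pow_add]
      simp [insertAt, lpar, pow_add]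
    · have h2 : ¬ (y :: I).get k.succ = b := h
      rw [if_neg h, if_neg h2]; simp

lemma bc_left (ha : par r a = 0) (hb : par r b = 1) (I : List (Fin m)) (x : Fin m) :
    basisComp r (I, x) ([a, a], b) = - io x (dW (ev r) a b I) := by
  induction I with
  | nil => simp [basisComp, dW]
  | cons y I ih =>
    rw [bc_cons ha hb, ih, dW]
    simp only [map_add, map_smul, map_neg, io_lm]
    by_cases h : y = b
    · subst h
      simp [hb, ev, io_lm, io_single, lmC_single, add_comm]
    · simp [h, ev, add_comm]

lemma bc_right (ha : par r a = 0) (I : List (Fin m)) (x : Fin m) :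
    basisComp r ([a, a], b) (I, x) =
      if a = x then io b (lm a (Finsupp.single I 1) + rm a (Finsupp.single I 1)) else 0 := by
  unfold basisComp
  refine (Fin.sum_univ_two _).trans ?_
  by_cases h : a = x
  · simp [h, insertAt, lpar, h ▸ ha, io_single, lm_single, rm_single, add_comm]
  · simp [h]

noncomputable def EE (a b : Fin m) : TT (Fin m) × TT (Fin m) →ₗ[ℂ] Cochain m :=
  (io a).coprod (io b)

lemma io_apply_self (x : Fin m) (u : TT (Fin m)) (l : List (Fin m)) : io x u (l, x) = u l := by
  have hinj : Function.Injective (fun l : List (Fin m) => (l, x)) := fun l l' h => by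
    simpa using h
  exact Finsupp.mapDomain_apply hinj u l

lemma io_apply_ne {x y : Fin m} (h : x ≠ y) (u : TT (Fin m)) (l : List (Fin m)) :
    io x u (l, y) = 0 := by
  refine Finsupp.mapDomain_of_notMem_range u (l, y) ?_
  rintro ⟨l', hl⟩
  exact h (congrArg Prod.snd hl)

lemma EE_inj (hab : a ≠ b) : Function.Injective (EE a b) := by
  rw [← LinearMap.ker_eq_bot, LinearMap.ker_eq_bot']
  rintro ⟨u, v⟩ h
  have h' : io a u + io b v = 0 := by simpa [EE] using h
  have hu : u = 0 := by
    ext l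
    have := DFunLike.congr_fun h' (l, a)
    rw [Finsupp.add_apply, io_apply_self, io_apply_ne hab.symm] at this
    simpa using this
  have hv : v = 0 := by
    ext l
    have := DFunLike.congr_fun h' (l, b)
    rw [Finsupp.add_apply, io_apply_self, io_apply_ne hab] at this
    simpa using this
  rw [hu, hv]; rfl

lemma Dop_single (ha : par r a = 0) (hb : par r b = 1) (I : List (Fin m)) (x : Fin m) :
    Dop r a b (Finsupp.single (I, x) 1) =
      (if a = x then io b (lm a (Finsupp.single I 1) + rm a (Finsupp.single I 1)) else 0) +
      ((-1 : ℂ) ^ (ppar r (I, x))) • io x (dW (ev r) a b I) := by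
  unfold Dop dd
  rw [LinearMap.sub_apply, LinearMap.comp_apply, LinearMap.flip_apply, twist_single, map_smul,
    LinearMap.smul_apply, comp_single, comp_single, bc_left ha hb, bc_right ha]
  rw [smul_neg, sub_neg_eq_add]

lemma dT_sg_single (e : Fin m → ℂ) (I : List (Fin m)) :
    dT e a b (sg e (Finsupp.single I 1)) = (I.map e).prod • dW e a b I := by
  simp [dT, sg]

lemma Dop_io_a (hab : a ≠ b) (ha : par r a = 0) (hb : par r b = 1) (u : TT (Fin m)) :
    Dop r a b (io a u) = EE a b (DD (ev r) a b (u, 0)) := by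
  have : Dop r a b ∘ₗ io a = EE a b ∘ₗ DD (ev r) a b ∘ₗ LinearMap.inl ℂ _ _ := LinearMap.ext (T_ext (fun l => by
    simp only [LinearMap.comp_apply, LinearMap.inl_apply, DD_apply, io_single,
      Dop_single ha hb, EE, LinearMap.coprod_apply, dT_sg_single, ev_prod, map_zero, sub_zero]
    simp [ppar, ha, add_comm]))
  exact LinearMap.congr_fun this u

lemma Dop_io_b (hab : a ≠ b) (ha : par r a = 0) (hb : par r b = 1) (u : TT (Fin m)) :
    Dop r a b (io b u) = EE a b (DD (ev r) a b (0, u)) := by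
  have : Dop r a b ∘ₗ io b = EE a b ∘ₗ DD (ev r) a b ∘ₗ LinearMap.inr ℂ _ _ := LinearMap.ext (T_ext (fun l => by
    simp only [LinearMap.comp_apply, LinearMap.inr_apply, DD_apply, io_single,
      Dop_single ha hb, EE, LinearMap.coprod_apply, dT_sg_single, ev_prod, map_zero]
    simp [ppar, hb, hab, pow_add]))
  exact LinearMap.congr_fun this u

lemma Dop_EE (hab : a ≠ b) (ha : par r a = 0) (hb : par r b = 1) (p : TT (Fin m) × TT (Fin m)) :
    Dop r a b (EE a b p) = EE a b (DD (ev r) a b p) := by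
  obtain ⟨u, v⟩ := p
  have h : ((u, v) : TT (Fin m) × TT (Fin m)) = (u, 0) + (0, v) := by simp
  rw [h, map_add (DD (ev r) a b), map_add (EE a b) (DD (ev r) a b (u, 0)), ← Dop_io_a hab ha hb,
    ← Dop_io_b hab ha hb, ← map_add]
  simp [EE]

lemma Cnx_eq (n : ℕ) (x : Fin m) : Cnx m n x = (Tn (Fin m) n).map (io x) := by
  unfold Cnx Tn supp
  rw [Finsupp.supported_eq_span_single, Submodule.map_span]
  congr 1
  ext f
  constructor
  · rintro ⟨I, hI, rfl⟩
    exact ⟨_, ⟨I, hI, rfl⟩, io_single _ _ _⟩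
  · rintro ⟨_, ⟨I, hI, rfl⟩, rfl⟩
    exact ⟨I, hI, io_single _ _ _⟩

lemma Cpair_eq (n : ℕ) :
    Cpair m a b n = ((Tn (Fin m) n).prod (Tn (Fin m) n)).map (EE a b) := by
  unfold Cpair EE
  rw [Cnx_eq, Cnx_eq, LinearMap.map_coprod_prod]

lemma Tn_eq (n : ℕ) : Tn (Fin m) n = supp (fun l => l.length = n ∧ True) := by
  simp [Tn]

instance fin_Tn (n : ℕ) : FiniteDimensional ℂ (Tn (Fin m) n) := by
  rw [Tn_eq]; exact fin_supp _ _

lemma finrank_Tn (n : ℕ) : Module.finrank ℂ (Tn (Fin m) n) = m ^ n := by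
  rw [Tn_eq, finrank_supp, cnt_top n (fun _ => trivial), Fintype.card_fin]

def pe (S T : Submodule ℂ (TT (Fin m))) : (S.prod T) ≃ₗ[ℂ] S × T where
  toFun p := (⟨p.1.1, p.2.1⟩, ⟨p.1.2, p.2.2⟩)
  invFun q := ⟨(q.1.1, q.2.1), q.1.2, q.2.2⟩
  map_add' _ _ := rfl
  map_smul' _ _ := rfl
  left_inv _ := rfl
  right_inv _ := rfl

instance fin_TT (n : ℕ) : FiniteDimensional ℂ ((Tn (Fin m) n).prod (Tn (Fin m) n)) :=
  Module.Finite.equiv (pe _ _).symm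

lemma finrank_TT (n : ℕ) :
    Module.finrank ℂ ((Tn (Fin m) n).prod (Tn (Fin m) n)) = 2 * m ^ n := by
  rw [(pe _ _).finrank_eq, Module.finrank_prod, finrank_Tn, two_mul]

instance fin_Cpair (n : ℕ) : FiniteDimensional ℂ (Cpair m a b n) := by
  rw [Cpair_eq]; infer_instance

lemma finrank_Cpair (hab : a ≠ b) (n : ℕ) : Module.finrank ℂ (Cpair m a b n) = 2 * m ^ n := by
  rw [Cpair_eq, ← finrank_TT n]
  exact (Submodule.equivMapOfInjective _ (EE_inj hab) _).finrank_eq.symm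

lemma map_Dop (hab : a ≠ b) (ha : par r a = 0) (hb : par r b = 1) (n : ℕ) :
    (Cpair m a b n).map (Dop r a b) =
      (((Tn (Fin m) n).prod (Tn (Fin m) n)).map (DD (ev r) a b)).map (EE a b) := by
  rw [Cpair_eq, ← Submodule.map_comp, ← Submodule.map_comp]
  congr 1
  exact LinearMap.ext (fun p => Dop_EE hab ha hb p)

lemma Dat_ev (hab : a ≠ b) (ha : par r a = 0) (hb : par r b = 1) : Dat (ev r) a b where
  ab := hab
  ea := by simp [ev, ha]
  eb := by simp [ev, hb]
  ee x := by rw [ev, ← mul_pow]; norm_num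

lemma finrank_map_Dop (hab : a ≠ b) (ha : par r a = 0) (hb : par r b = 1) (n : ℕ) :
    Module.finrank ℂ ((Cpair m a b n).map (Dop r a b)) =
      2 * cnt (isU a b) n + cnt (isP a b true) n := by
  rw [map_Dop hab ha hb, ← finrank_DD (Dat_ev hab ha hb) n]
  exact (Submodule.equivMapOfInjective _ (EE_inj hab) _).finrank_eq.symm

lemma finrank_Zpair (hab : a ≠ b) (ha : par r a = 0) (hb : par r b = 1) (n : ℕ) :
    (2 * cnt (isU a b) n + cnt (isP a b true) n) + Module.finrank ℂ (Zpair r a b n) =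
      2 * m ^ n := by
  rw [← finrank_map_Dop hab ha hb, ← finrank_Cpair hab,
    ← LinearMap.finrank_range_add_finrank_ker ((Dop r a b).domRestrict (Cpair m a b n))]
  congr 1
  · rw [LinearMap.range_domRestrict]
  · rw [LinearMap.ker_domRestrict]
    have h : Zpair r a b n =
        ((LinearMap.ker (Dop r a b)).comap (Cpair m a b n).subtype).map
          (Cpair m a b n).subtype := by
      rw [Submodule.map_comap_subtype]; rfl
    rw [h]
    exact (Submodule.equivMapOfInjective _ (Submodule.injective_subtype _) _).finrank_eq.symm

lemma DD_mem (n : ℕ) (e : Fin m → ℂ) (p : TT (Fin m) × TT (Fin m))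
    (hp : p ∈ (Tn (Fin m) n).prod (Tn (Fin m) n)) :
    DD e a b p ∈ (Tn (Fin m) (n + 1)).prod (Tn (Fin m) (n + 1)) := by
  obtain ⟨h1, h2⟩ := hp
  have h := prj_DD (e := e) (a := a) (b := b) n p
  rw [LinearMap.prodMap_apply, LinearMap.prodMap_apply, prj_eq h1, prj_eq h2] at h
  have key : ∀ w : TT (Fin m), prj (n + 1) w ∈ Tn (Fin m) (n + 1) := fun w =>
    supp_mono (fun l hl => hl.1) (prj_mem (Q := fun _ => True) (n + 1) (supp_top w))
  have e1 := congrArg Prod.fst h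
  have e2 := congrArg Prod.snd h
  refine ⟨?_, ?_⟩
  · rw [show (DD e a b p).1 = _ from e1.symm]; exact key _
  · rw [show (DD e a b p).2 = _ from e2.symm]; exact key _

lemma Bpair_le (hab : a ≠ b) (ha : par r a = 0) (hb : par r b = 1) (n : ℕ) :
    Bpair r a b (n + 1) ≤ Zpair r a b (n + 1) := by
  change (Cpair m a b n).map (Dop r a b) ≤ _
  rw [map_Dop hab ha hb, Zpair, Cpair_eq]
  rintro _ ⟨_, ⟨p, hp, rfl⟩, rfl⟩
  refine ⟨⟨_, DD_mem n _ p hp, rfl⟩, ?_⟩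
  rw [SetLike.mem_coe, LinearMap.mem_ker, Dop_EE hab ha hb, DD_DD (Dat_ev hab ha hb), map_zero]

instance fin_Zpair (n : ℕ) : FiniteDimensional ℂ (Zpair r a b n) :=
  Submodule.finiteDimensional_of_le (inf_le_left : Zpair r a b n ≤ Cpair m a b n)

lemma finrank_Hpair_zero (hab : a ≠ b) (ha : par r a = 0) (hb : par r b = 1) :
    Module.finrank ℂ (Hpair r a b 0) = 1 := by
  have h1 := finrank_Zpair hab ha hb 0
  have h2 := Submodule.finrank_quotient_add_finrank
    ((Bpair r a b 0).comap (Zpair r a b 0).subtype)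
  have h3 : Module.finrank ℂ ((Bpair r a b 0).comap (Zpair r a b 0).subtype) = 0 := by
    have : (Bpair r a b 0).comap (Zpair r a b 0).subtype = ⊥ := by
      change (⊥ : Submodule ℂ (Cochain m)).comap _ = ⊥
      rw [Submodule.comap_bot, Submodule.ker_subtype]
    rw [this, finrank_bot]
  rw [cntU_zero, cntP_zero] at h1
  simp only [pow_zero] at h1
  change Module.finrank ℂ (Hpair r a b 0) + _ = _ at h2
  omega

lemma finrank_Hpair_succ (hab : a ≠ b) (ha : par r a = 0) (hb : par r b = 1) (n : ℕ) :
    Module.finrank ℂ (Hpair r a b (n + 1)) + (2 * cnt (isU a b) n + cnt (isP a b true) n) +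
      (2 * cnt (isU a b) (n + 1) + cnt (isP a b true) (n + 1)) = 2 * m ^ (n + 1) := by
  have h1 := finrank_Zpair hab ha hb (n + 1)
  have h2 := Submodule.finrank_quotient_add_finrank
    ((Bpair r a b (n + 1)).comap (Zpair r a b (n + 1)).subtype)
  have h3 : Module.finrank ℂ ((Bpair r a b (n + 1)).comap (Zpair r a b (n + 1)).subtype) =
      2 * cnt (isU a b) n + cnt (isP a b true) n := by
    rw [(Submodule.comapSubtypeEquivOfLe (Bpair_le hab ha hb n)).finrank_eq]
    exact finrank_map_Dop hab ha hb n
  change Module.finrank ℂ (Hpair r a b (n + 1)) + _ = _ at h2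
  omega

end Bridge

/-- `dim Ĥ^n_e + dim Ĥ^n_f = (r+s−1)^n` if `n ≡ 0, 1 (mod 4)` and
`= (r+s−1)^n + 1` if `n ≡ 2, 3 (mod 4)`. -/
theorem Hehat_Hfhat_dim_e1 (r s : ℕ) (hr : 1 ≤ r) (hs : 1 ≤ s)
    (e1 fs : Fin (r + s)) (he1 : (e1 : ℕ) = 0) (hfs : (fs : ℕ) = r + s - 1) :
    ∀ n : ℕ,
      Module.finrank ℂ (Hehat r e1 fs n) + Module.finrank ℂ (Hfhat r e1 fs n) =
        (r + s - 1) ^ n + (if n % 4 = 0 ∨ n % 4 = 1 then 0 else 1) := by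
  intro n
  have hab : e1 ≠ fs := by
    intro h; rw [h] at he1; omega
  have ha : par r e1 = 0 := by
    unfold par; rw [if_pos (by omega)]
  have hb : par r fs = 1 := by
    unfold par; rw [if_neg (by omega)]
  rw [Submodule.finrank_quotient_add_finrank (Hfhat r e1 fs n)]
  obtain ⟨p, hp⟩ : ∃ p, r + s = p + 2 := ⟨r + s - 2, by omega⟩
  have hc : Fintype.card (Fin (r + s)) = p + 2 := by rw [Fintype.card_fin, hp]
  have hp1 : r + s - 1 = p + 1 := by omega
  cases n with
  | zero => rw [finrank_Hpair_zero hab ha hb]; simp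
  | succ n =>
    have h := finrank_Hpair_succ hab ha hb n
    have hU := cntU hab hc n
    have hP := cntP hab hc n
    rw [hp1]
    rw [show ((r + s) ^ (n + 1)) = (p + 2) ^ (n + 1) by rw [hp]] at h
    generalize (if (n + 1) % 4 = 0 ∨ (n + 1) % 4 = 1 then 0 else 1) = t at hP ⊢
    omega

end NilpotentCohomology
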